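/- arXiv:1504.05293 — 6 statements merged into one kernel-verified Lean document; each statement's English description precedes it below -/
import Mathlib

section
/- Let d₀, d₁, d₂ ∈ Z₇ with d₀ + d₁ + d₂ ≡ 0 (mod 7). Then the edge set E₀₁(d₀) ∪ E₁₂(d₁) ∪ E₂₀(d₂) forms a C₃-factor of the complete tripartite graph K_{7,7,7}. -/
open SimpleGraph

/-- `F` is an `H`-factor (of the complete graph on its vertex type, or of any graph
containing it): every connected component of `F`, viewed as an induced subgraph,
is isomorphic to `H`.  Since `F` is a graph on all of `V`, it is automatically spanning. -/
def IsHFactor {V W : Type*} (H : SimpleGraph W) (F : SimpleGraph V) : Prop :=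
  ∀ c : F.ConnectedComponent, Nonempty (F.induce c.supp ≃g H)

/-- A `C_k`-factor: a spanning subgraph each of whose connected components is a
cycle of length `k` (in particular it is 2-regular). -/
def IsCycleFactor {V : Type*} (k : ℕ) (F : SimpleGraph V) : Prop :=
  IsHFactor (SimpleGraph.cycleGraph k) F

/-- `(G; C_m^r, C_k^s)`: a partition of the edge set of `G` into `r` `C_m`-factors
and `s` `C_k`-factors. -/
def IsCycleDecomp {V : Type*} (G : SimpleGraph V) (m k r s : ℕ) : Prop :=
  ∃ F : Fin r ⊕ Fin s → SimpleGraph V,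
    (∀ i, F i ≤ G) ∧
    (∀ e ∈ G.edgeSet, ∃! i, e ∈ (F i).edgeSet) ∧
    (∀ i : Fin r, IsCycleFactor m (F (Sum.inl i))) ∧
    (∀ j : Fin s, IsCycleFactor k (F (Sum.inr j)))

/-- The complete tripartite graph `K_{7,7,7}` on vertex set `Z₇ × Z₃`, with the three
partite sets `V_i = Z₇ × {i}` for `i ∈ Z₃` (the vertex `j_i` is the pair `(j, i)`). -/
def K777 : SimpleGraph (ZMod 7 × ZMod 3) where
  Adj x y := x.2 ≠ y.2
  symm := ⟨fun _ _ h => h.symm⟩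
  loopless := ⟨fun _ h => h rfl⟩

/-- The edge set `E_{ij}(d) = {{l_i, (l+d)_j} : l ∈ Z₇}`. -/
def Eij (i j : ZMod 3) (d : ZMod 7) : Set (Sym2 (ZMod 7 × ZMod 3)) :=
  {e | ∃ l : ZMod 7, e = s((l, i), (l + d, j))}

/-- Lemma 2.1: if `d₀ + d₁ + d₂ ≡ 0 (mod 7)`, then the edges of
`E₀₁(d₀) ∪ E₁₂(d₁) ∪ E₂₀(d₂)` form a `C₃`-factor of `K_{7,7,7}`. -/
theorem triangle_factor_of_sum_zero (d₀ d₁ d₂ : ZMod 7) (h : d₀ + d₁ + d₂ = 0) :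
    ∃ F : SimpleGraph (ZMod 7 × ZMod 3),
      F ≤ K777 ∧
      F.edgeSet = Eij 0 1 d₀ ∪ Eij 1 2 d₁ ∪ Eij 2 0 d₂ ∧
      IsCycleFactor 3 F := by
  let g : ZMod 3 → ZMod 7 := fun i => if i = 0 then 0 else if i = 1 then d₀ else d₀ + d₁
  have g0 : g 0 = 0 := rfl
  have g1 : g 1 = d₀ := rfl
  have g2 : g 2 = d₀ + d₁ := rfl
  clear_value g
  have hd : d₂ = -(d₀ + d₁) := by linear_combination h
  let F : SimpleGraph (ZMod 7 × ZMod 3) :=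
    { Adj := fun x y => x.2 ≠ y.2 ∧ x.1 - g x.2 = y.1 - g y.2
      symm := ⟨fun _ _ h => ⟨h.1.symm, h.2.symm⟩⟩
      loopless := ⟨fun _ h => h.1 rfl⟩ }
  have hF : ∀ x y, F.Adj x y ↔ (x.2 ≠ y.2 ∧ x.1 - g x.2 = y.1 - g y.2) := fun _ _ => Iff.rfl
  clear_value F
  refine ⟨F, fun x y hxy => ((hF x y).1 hxy).1, ?_, ?_⟩
  · ext e
    induction e using Sym2.ind with
    | _ x y =>
      obtain ⟨a, i⟩ := x
      obtain ⟨b, j⟩ := y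
      rw [SimpleGraph.mem_edgeSet, hF]
      simp only [Eij, Set.mem_union, Set.mem_ofPred_eq, Sym2.eq_iff, Prod.mk.injEq]
      constructor
      · rintro ⟨hij, hab⟩
        have h3 : ∀ k : ZMod 3, k = 0 ∨ k = 1 ∨ k = 2 := by decide
        rcases h3 i with rfl | rfl | rfl <;> rcases h3 j with rfl | rfl | rfl <;>
          simp only [g0, g1, g2] at hab
        · exact absurd rfl hij
        · exact Or.inl (Or.inl ⟨a, Or.inl ⟨⟨rfl, rfl⟩, by linear_combination -hab, rfl⟩⟩)
        · exact Or.inr ⟨b, Or.inr ⟨⟨by rw [hd]; linear_combination hab, rfl⟩, rfl, rfl⟩⟩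
        · exact Or.inl (Or.inl ⟨b, Or.inr ⟨⟨by linear_combination hab, rfl⟩, rfl, rfl⟩⟩)
        · exact absurd rfl hij
        · exact Or.inl (Or.inr ⟨a, Or.inl ⟨⟨rfl, rfl⟩, by linear_combination -hab, rfl⟩⟩)
        · exact Or.inr ⟨a, Or.inl ⟨⟨rfl, rfl⟩, by rw [hd]; linear_combination -hab, rfl⟩⟩
        · exact Or.inl (Or.inr ⟨b, Or.inr ⟨⟨by linear_combination hab, rfl⟩, rfl, rfl⟩⟩)
        · exact absurd rfl hij
      · rintro ((⟨l, h⟩ | ⟨l, h⟩) | ⟨l, h⟩) <;>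
          rcases h with ⟨⟨rfl, rfl⟩, rfl, rfl⟩ | ⟨⟨rfl, rfl⟩, rfl, rfl⟩ <;>
          refine ⟨by decide, ?_⟩ <;> simp only [g0, g1, g2, hd] <;> ring
  · intro c
    induction c using SimpleGraph.ConnectedComponent.ind with
    | _ v =>
      have hs : ∀ x, x ∈ (F.connectedComponentMk v).supp ↔ x.1 - g x.2 = v.1 - g v.2 := by
        intro x
        rw [SimpleGraph.ConnectedComponent.mem_supp_iff, SimpleGraph.ConnectedComponent.eq]
        constructor
        · rintro ⟨w⟩
          induction w with
          | nil => rfl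
          | cons hadj _ ih => exact ((hF _ _).1 hadj).2.trans ih
        · intro hx
          by_cases hxv : x.2 = v.2
          · have : x = v := Prod.ext (by rw [hxv] at hx; exact sub_left_injective hx) hxv
            rw [this]
          · exact ((hF x v).2 ⟨hxv, hx⟩).reachable
      rw [SimpleGraph.cycleGraph_three_eq_top]
      let f : (F.connectedComponentMk v).supp ≃ ZMod 3 :=
        { toFun := fun x => x.1.2
          invFun := fun i => ⟨(v.1 - g v.2 + g i, i), (hs _).2 (by simp)⟩
          left_inv := fun x => by
            have := (hs _).1 x.2
            apply Subtype.ext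
            apply Prod.ext
            · simp only [← this]; ring
            · rfl
          right_inv := fun i => rfl }
      refine ⟨⟨f, ?_⟩⟩
      intro x y
      rw [SimpleGraph.top_adj, SimpleGraph.induce_adj, hF]
      have := ((hs _).1 x.2).trans ((hs _).1 y.2).symm
      exact ⟨fun h => ⟨h, this⟩, fun h => h.1⟩
end

section
/- The edge set ⋃_{d ∈ {1,6}} (E₀₁(d) ∪ E₁₂(d) ∪ E₂₀(d)) can be partitioned into 2 edge-disjoint C₇-factors of the complete tripartite graph K_{7,7,7}. -/
open SimpleGraph

/-- Graph of the cycles `l ↦ (l, f l + c)`, for `c` in `Z₃`. -/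
def twist (f : ZMod 7 → ZMod 3) : SimpleGraph (ZMod 7 × ZMod 3) where
  Adj x y := x.2 - f x.1 = y.2 - f y.1 ∧ (y.1 = x.1 + 1 ∨ x.1 = y.1 + 1)
  symm := ⟨fun _ _ h => ⟨h.1.symm, h.2.symm⟩⟩
  loopless := ⟨fun x h => by
    have h2 : x.1 = x.1 + 1 := by simpa using h.2
    exact (by decide : ∀ a : ZMod 7, a ≠ a + 1) _ h2⟩

lemma twist_reach (f : ZMod 7 → ZMod 3) (x y : ZMod 7 × ZMod 3) :
    (twist f).Reachable x y ↔ x.2 - f x.1 = y.2 - f y.1 := by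
  constructor
  · rintro ⟨w⟩
    induction w with
    | nil => rfl
    | cons h _ ih => exact h.1.trans ih
  · intro h
    have key : ∀ n : ℕ, (twist f).Reachable x
        (x.1 + n, f (x.1 + n) + (x.2 - f x.1)) := by
      intro n
      induction n with
      | zero => simp
      | succ n ih =>
        refine ih.trans (SimpleGraph.Adj.reachable ⟨?_, Or.inl ?_⟩)
        · simp
        · push_cast; ring
    have := key (y.1 - x.1).val
    rw [ZMod.natCast_zmod_val] at this
    convert this using 1
    ext
    · simp
    · simp [h]

lemma twist_factor (f : ZMod 7 → ZMod 3) : IsCycleFactor 7 (twist f) := by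
  intro c
  induction c using SimpleGraph.ConnectedComponent.ind with
  | _ v =>
    have hm : ∀ y, y ∈ ((twist f).connectedComponentMk v).supp ↔
        y.2 - f y.1 = v.2 - f v.1 := by
      intro y
      rw [SimpleGraph.ConnectedComponent.mem_supp_iff, SimpleGraph.ConnectedComponent.eq,
        twist_reach]
    let e : ((twist f).connectedComponentMk v).supp ≃ ZMod 7 :=
      { toFun := fun y => y.1.1
        invFun := fun l => ⟨(l, f l + (v.2 - f v.1)), by rw [hm]; simp⟩
        left_inv := by
          rintro ⟨y, hy⟩
          have := (hm y).1 hy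
          ext
          · rfl
          · simp [← this]
        right_inv := fun l => rfl }
    have hc : ∀ a b : ZMod 7, (SimpleGraph.cycleGraph 7).Adj a b ↔
        (b = a + 1 ∨ a = b + 1) := by
      intro a b
      refine (SimpleGraph.cycleGraph_adj (n := 5) (u := a) (v := b)).trans ?_
      have h : ∀ a b : Fin 7, (a - b = 1 ∨ b - a = 1) ↔ (b = a + 1 ∨ a = b + 1) := by
        decide
      exact h a b
    refine ⟨⟨e, ?_⟩⟩
    rintro ⟨x, hx⟩ ⟨y, hy⟩
    refine (hc x.1 y.1).trans ?_
    have h : x.2 - f x.1 = y.2 - f y.1 := ((hm x).1 hx).trans ((hm y).1 hy).symm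
    exact ⟨fun h2 => ⟨h, h2⟩, fun h2 => h2.2⟩

/-- The potential with steps `+,+,-,-,-,-,-`, of total `-3 = 0` in `Z₃`. -/
def pot : ZMod 7 → ZMod 3 := fun l => (![0, 1, 2, 1, 0, 2, 1] : Fin 7 → ZMod 3) l

/-- Lemma 2.3: the edges of `⋃_{d ∈ {1,6}} (E₀₁(d) ∪ E₁₂(d) ∪ E₂₀(d))` can be
decomposed into two edge-disjoint `C₇`-factors of `K_{7,7,7}`. -/
theorem two_heptagon_factors_1_6 :
    ∃ F₁ F₂ : SimpleGraph (ZMod 7 × ZMod 3),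
      F₁ ≤ K777 ∧ F₂ ≤ K777 ∧
      IsCycleFactor 7 F₁ ∧ IsCycleFactor 7 F₂ ∧
      Disjoint F₁.edgeSet F₂.edgeSet ∧
      F₁.edgeSet ∪ F₂.edgeSet =
        ⋃ d ∈ ({1, 6} : Set (ZMod 7)), (Eij 0 1 d ∪ Eij 1 2 d ∪ Eij 2 0 d) := by
  have hK : ∀ f : ZMod 7 → ZMod 3, (∀ l, f (l + 1) ≠ f l) → twist f ≤ K777 := by
    rintro f hf ⟨a, i⟩ ⟨b, j⟩ ⟨h1, h2⟩ (h3 : i = j)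
    simp only at h1 h2
    subst h3
    have h1 := sub_right_injective h1
    rcases h2 with rfl | rfl
    · exact hf _ h1.symm
    · exact hf _ h1
  refine ⟨twist pot, twist (fun l => - pot l), hK _ (by decide), hK _ (by decide),
    twist_factor _, twist_factor _, ?_, ?_⟩
  · rw [Set.disjoint_left]
    intro e
    induction e using Sym2.ind with
    | _ x y =>
      simp only [SimpleGraph.mem_edgeSet, twist]
      revert x y
      decide +kernel
  · ext e
    induction e using Sym2.ind with
    | _ x y =>
      simp only [SimpleGraph.mem_edgeSet, twist, Set.mem_union, Set.mem_iUnion, Eij,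
        Set.mem_ofPred_eq, Set.mem_insert_iff, Set.mem_singleton_iff, exists_prop,
        exists_eq_or_imp, exists_eq_left]
      revert x y
      decide +kernel
end

section
/- The edge set ⋃_{d ∈ {3,4}} (E₀₁(d) ∪ E₁₂(d) ∪ E₂₀(d)) can be partitioned into 2 edge-disjoint C₇-factors of the complete tripartite graph K_{7,7,7}. -/
open SimpleGraph

/-- The twist: a vertex at level `l` is joined to level `l + 3` with part shifted by
`s * tw l`. -/
def tw (l : ZMod 7) : ZMod 3 := if l = 0 ∨ l = 1 then -1 else 1

/-- The successor map along a factor. -/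
def nxt (s : ZMod 3) (x : ZMod 7 × ZMod 3) : ZMod 7 × ZMod 3 := (x.1 + 3, x.2 + s * tw x.1)

/-- The factor of sign `s`. -/
def Fac (s : ZMod 3) : SimpleGraph (ZMod 7 × ZMod 3) where
  Adj x y := y = nxt s x ∨ x = nxt s y
  symm := ⟨fun _ _ h => h.symm⟩
  loopless := ⟨fun x h => by
    have : ∀ (l : ZMod 7), l ≠ l + 3 := by decide
    rcases h with h | h <;> exact this x.1 (congrArg Prod.fst h)⟩

instance (s : ZMod 3) : DecidableRel (Fac s).Adj := fun x y =>
  inferInstanceAs (Decidable (y = nxt s x ∨ x = nxt s y))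

theorem iso_of_cycle {V : Type*} (F : SimpleGraph V) (v : V) (f : Fin 7 → V)
    (h0 : f 0 = v) (hinj : Function.Injective f)
    (hadj : ∀ a b, F.Adj (f a) (f b) ↔ (cycleGraph 7).Adj a b)
    (hcl : ∀ a y, F.Adj (f a) y → ∃ b, f b = y) :
    Nonempty (F.induce (F.connectedComponentMk v).supp ≃g cycleGraph 7) := by
  have hreach : ∀ a, F.Reachable (f a) v := by
    intro a
    have h : (cycleGraph 7).Reachable a 0 := (cycleGraph_connected (n := 6)).preconnected a 0
    have := h.map (⟨f, fun {a b} h => (hadj a b).2 h⟩ : cycleGraph 7 →g F)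
    rw [← h0]; exact this
  have hwalk : ∀ x y, F.Walk x y → (∃ a, f a = x) → ∃ b, f b = y := by
    intro x y p
    induction p with
    | nil => exact id
    | cons h p ih =>
      rintro ⟨a, rfl⟩
      exact ih (hcl a _ h)
  let g : Fin 7 → (F.connectedComponentMk v).supp := fun a =>
    ⟨f a, ConnectedComponent.sound (hreach a)⟩
  have hg : Function.Bijective g := by
    constructor
    · intro a b h
      exact hinj (congrArg Subtype.val h)
    · rintro ⟨y, hy⟩
      obtain ⟨p⟩ := (ConnectedComponent.exact hy).symm
      obtain ⟨b, hb⟩ := hwalk _ _ p ⟨0, h0⟩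
      exact ⟨b, Subtype.ext hb⟩
  have e : cycleGraph 7 ≃g F.induce (F.connectedComponentMk v).supp :=
    { Equiv.ofBijective g hg with map_rel_iff' := fun {a b} => hadj a b }
  exact ⟨e.symm⟩

set_option maxRecDepth 100000 in
set_option maxHeartbeats 4000000 in
theorem fac_isCycleFactor (s : ZMod 3) (hs : s ≠ 0) : IsCycleFactor 7 (Fac s) := by
  intro c
  induction c using ConnectedComponent.ind with
  | h v =>
    refine iso_of_cycle _ v (fun a => (nxt s)^[a.val] v) rfl ?_ ?_ ?_
    · have : ∀ s : ZMod 3, ∀ v, ∀ a b : Fin 7, (nxt s)^[a.val] v = (nxt s)^[b.val] v → a = b := by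
        decide
      exact fun a b => this s v a b
    · have : ∀ s : ZMod 3, s ≠ 0 → ∀ v, ∀ a b : Fin 7,
          (Fac s).Adj ((nxt s)^[a.val] v) ((nxt s)^[b.val] v) ↔ a - b = 1 ∨ b - a = 1 := by
        decide
      intro a b
      rw [cycleGraph_adj]
      exact this s hs v a b
    · have hp : ∀ s : ZMod 3, s ≠ 0 → ∀ v, ∀ a : Fin 7,
          (nxt s)^[(a + 1).val] v = nxt s ((nxt s)^[a.val] v) := by decide
      have hi : ∀ s : ZMod 3, ∀ x y, nxt s x = nxt s y → x = y := by decide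
      rintro a y (h | h)
      · exact ⟨a + 1, (hp s hs v a).trans h.symm⟩
      · refine ⟨a - 1, hi s _ _ ?_⟩
        have := hp s hs v (a - 1)
        rw [sub_add_cancel] at this
        exact this.symm.trans h

set_option maxRecDepth 100000 in
set_option maxHeartbeats 4000000 in
theorem two_heptagon_factors_3_4 :
    ∃ F₁ F₂ : SimpleGraph (ZMod 7 × ZMod 3),
      F₁ ≤ K777 ∧ F₂ ≤ K777 ∧
      IsCycleFactor 7 F₁ ∧ IsCycleFactor 7 F₂ ∧
      Disjoint F₁.edgeSet F₂.edgeSet ∧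
      F₁.edgeSet ∪ F₂.edgeSet =
        ⋃ d ∈ ({3, 4} : Set (ZMod 7)), (Eij 0 1 d ∪ Eij 1 2 d ∪ Eij 2 0 d) := by
  have hle : ∀ s : ZMod 3, s ≠ 0 → Fac s ≤ K777 := by
    have : ∀ s : ZMod 3, s ≠ 0 → ∀ x y, (Fac s).Adj x y → x.2 ≠ y.2 := by decide
    exact fun s hs x y h => this s hs x y h
  refine ⟨Fac 1, Fac (-1), hle _ (by decide), hle _ (by decide),
    fac_isCycleFactor _ (by decide), fac_isCycleFactor _ (by decide), ?_, ?_⟩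
  · rw [Set.disjoint_left]
    intro e
    induction e using Sym2.ind with
    | h x y =>
      have : ∀ x y, (Fac 1).Adj x y → ¬ (Fac (-1)).Adj x y := by decide
      exact this x y
  · ext e
    induction e using Sym2.ind with
    | h x y =>
      have : ∀ x y : ZMod 7 × ZMod 3, ((Fac 1).Adj x y ∨ (Fac (-1)).Adj x y) ↔
          (y.2 = x.2 + 1 ∧ (y.1 = x.1 + 3 ∨ y.1 = x.1 + 4)) ∨
          (x.2 = y.2 + 1 ∧ (x.1 = y.1 + 3 ∨ x.1 = y.1 + 4)) := by decide
      have h2 : ∀ i j : ZMod 3, j = i + 1 ↔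
          (i = 0 ∧ j = 1) ∨ (i = 1 ∧ j = 2) ∨ (i = 2 ∧ j = 0) := by decide
      rw [Set.mem_union, mem_edgeSet, mem_edgeSet, this, h2, h2]
      obtain ⟨a, i⟩ := x
      obtain ⟨b, j⟩ := y
      have key : ∀ p q : ZMod 3, ∀ d, s((a, i), (b, j)) ∈ Eij p q d ↔
          (i = p ∧ j = q ∧ b = a + d) ∨ (j = p ∧ i = q ∧ a = b + d) := by
        intro p q d
        simp only [Eij, Set.mem_ofPred_eq, Sym2.eq_iff, Prod.mk.injEq]
        constructor
        · rintro ⟨l, ⟨⟨rfl, rfl⟩, rfl, rfl⟩ | ⟨⟨rfl, rfl⟩, rfl, rfl⟩⟩ <;> simp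
        · rintro (⟨rfl, rfl, rfl⟩ | ⟨rfl, rfl, rfl⟩)
          · exact ⟨a, by simp⟩
          · exact ⟨b, by simp⟩
      simp only [Set.mem_iUnion, Set.mem_union, key, Set.mem_insert_iff,
        Set.mem_singleton_iff, exists_prop, exists_eq_or_imp, exists_eq_left]
      clear key this h2
      generalize (b = a + 3) = P
      generalize (b = a + 4) = Q
      generalize (a = b + 3) = R
      generalize (a = b + 4) = S
      generalize (i = 0) = i0
      generalize (i = 1) = i1
      generalize (i = 2) = i2
      generalize (j = 0) = j0
      generalize (j = 1) = j1
      generalize (j = 2) = j2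
      constructor
      · rintro (⟨⟨h, h'⟩ | ⟨h, h'⟩ | ⟨h, h'⟩, k | k⟩ | ⟨⟨h, h'⟩ | ⟨h, h'⟩ | ⟨h, h'⟩, k | k⟩) <;>
          simp only [h, h', k, true_and, and_true, true_or, or_true]
      · rintro ((((⟨h, h', k⟩ | ⟨h, h', k⟩) | (⟨h, h', k⟩ | ⟨h, h', k⟩)) |
          (⟨h, h', k⟩ | ⟨h, h', k⟩)) | (((⟨h, h', k⟩ | ⟨h, h', k⟩) |
          (⟨h, h', k⟩ | ⟨h, h', k⟩)) | (⟨h, h', k⟩ | ⟨h, h', k⟩))) <;>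
          simp only [h, h', k, true_and, and_true, true_or, or_true]
end

section
/- For every α ∈ {0, 1, 3, 5, 7} and β = 7 − α, the complete tripartite graph K_{7,7,7} admits a decomposition of its edge set into α C₃-factors and β C₇-factors. -/
open SimpleGraph

namespace K777Aux

/-- `m` disjoint copies of the cycle of length `k`. -/
def blk (m k : ℕ) : SimpleGraph (Fin m × Fin k) where
  Adj x y := x.1 = y.1 ∧ (cycleGraph k).Adj x.2 y.2
  symm := ⟨fun _ _ h => ⟨h.1.symm, h.2.symm⟩⟩
  loopless := ⟨fun _ h => (cycleGraph k).loopless.irrefl _ h.2⟩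

theorem blk_reach {m k : ℕ} (hk : (cycleGraph k).Connected) (i : Fin m) (a b : Fin k) :
    (blk m k).Reachable (i, a) (i, b) := by
  let f : cycleGraph k →g blk m k := ⟨fun a => (i, a), fun h => ⟨rfl, h⟩⟩
  exact (hk.preconnected a b).map f

theorem blk_reach_fst {m k : ℕ} {x y : Fin m × Fin k} (h : (blk m k).Reachable x y) :
    x.1 = y.1 := by
  obtain ⟨w⟩ := h
  induction w with
  | nil => rfl
  | cons h _ ih => exact h.1.trans ih

/-- A graph isomorphic to `m` disjoint `k`-cycles is a `C_k`-factor. -/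
theorem factor_of_iso {V : Type*} {m k : ℕ} (hk : (cycleGraph k).Connected)
    (F : SimpleGraph V) (e : F ≃g blk m k) : IsCycleFactor k F := by
  intro c
  induction c using SimpleGraph.ConnectedComponent.ind with
  | h v =>
    have key : ∀ x : V, x ∈ (F.connectedComponentMk v).supp ↔ (e x).1 = (e v).1 := by
      intro x
      rw [SimpleGraph.ConnectedComponent.mem_supp_iff, SimpleGraph.ConnectedComponent.eq]
      rw [← e.reachable_iff]
      constructor
      · exact blk_reach_fst
      · intro h
        have := blk_reach hk (e v).1 (e x).2 (e v).2
        rw [← h] at this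
        convert this using 1
        exact Prod.ext h.symm rfl
    refine ⟨⟨⟨fun x => (e x.1).2, fun a => ⟨e.symm ((e v).1, a), ?_⟩, ?_, ?_⟩, ?_⟩⟩
    · rw [key]; simp
    · intro x
      apply Subtype.ext
      have h := (key x.1).1 x.2
      change e.symm ((e v).1, (e x.1).2) = x.1
      rw [← h]
      exact e.symm_apply_apply x.1
    · intro a
      simp
    · intro x y
      have hx := (key x.1).1 x.2
      have hy := (key y.1).1 y.2
      have h := e.map_adj_iff (v := x.1) (w := y.1)
      change (cycleGraph k).Adj (e x.1).2 (e y.1).2 ↔ F.Adj x.1 y.1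
      rw [← h]
      exact ⟨fun h => ⟨hx.trans hy.symm, h⟩, fun h => h.2⟩

theorem factor_comap {V : Type*} {m k : ℕ} (hk : (cycleGraph k).Connected)
    (P : V → Fin m × Fin k) (hP : Function.Bijective P) :
    IsCycleFactor k ((blk m k).comap P) :=
  factor_of_iso hk _ ⟨Equiv.ofBijective P hP, Iff.rfl⟩

/-- Position of a vertex in the `c`-th factor: (index of the cycle, place in the cycle). -/
def pos (m k : ℕ) [NeZero m] [NeZero k] (T : List (List ℕ)) (c : ℕ)
    (v : ZMod 7 × ZMod 3) : Fin m × Fin k :=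
  let n := (T.getD c []).getD (ZMod.val v.1 + 7 * ZMod.val v.2) 0
  (Fin.ofNat m (n / k), Fin.ofNat k n)

/-- The list of factors, triangles first. -/
def fac (α β : ℕ) (T : List (List ℕ)) : Fin α ⊕ Fin β → SimpleGraph (ZMod 7 × ZMod 3) :=
  Sum.elim (fun i => (blk 7 3).comap (pos 7 3 T i)) (fun j => (blk 3 7).comap (pos 3 7 T (α + j)))

instance (m k : ℕ) : DecidableRel (blk m k).Adj := fun _ _ =>
  inferInstanceAs (Decidable (_ ∧ _))

instance (α β : ℕ) (T : List (List ℕ)) (i) : DecidableRel (fac α β T i).Adj := fun x y =>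
  match i with
  | .inl i => inferInstanceAs (Decidable ((blk 7 3).Adj (pos 7 3 T i x) (pos 7 3 T i y)))
  | .inr j => inferInstanceAs
      (Decidable ((blk 3 7).Adj (pos 3 7 T (α + j) x) (pos 3 7 T (α + j) y)))

theorem conn3 : (cycleGraph 3).Connected := cycleGraph_connected

theorem conn7 : (cycleGraph 7).Connected := cycleGraph_connected

theorem decomp_of_table (α β : ℕ) (T : List (List ℕ))
    (h3 : ∀ i : Fin α, ∀ x y, pos 7 3 T i x = pos 7 3 T i y → x = y)
    (h7 : ∀ j : Fin β, ∀ x y, pos 3 7 T (α + j) x = pos 3 7 T (α + j) y → x = y)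
    (hle : ∀ i x y, (fac α β T i).Adj x y → x.2 ≠ y.2)
    (hex : ∀ x y : ZMod 7 × ZMod 3, x.2 ≠ y.2 →
      ∃ i, (fac α β T i).Adj x y ∧ ∀ j, (fac α β T j).Adj x y → j = i) :
    IsCycleDecomp K777 3 7 α β := by
  refine ⟨fac α β T, fun i x y h => hle i x y h, ?_, ?_, ?_⟩
  · intro e
    induction e using Sym2.ind with
    | _ x y =>
      intro h
      exact hex x y h
  · intro i
    exact factor_comap conn3 _ ((Fintype.bijective_iff_injective_and_card _).2
      ⟨fun x y h => h3 i x y h, by simp [ZMod.card]⟩)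
  · intro j
    exact factor_comap conn7 _ ((Fintype.bijective_iff_injective_and_card _).2
      ⟨fun x y h => h7 j x y h, by simp [ZMod.card]⟩)

/-- Positions of the vertices in the factors of the decomposition with 0 triangle factors. -/
def T0 : List (List ℕ) :=
  [[0, 7, 4, 14, 18, 16, 10, 9, 13, 11, 19, 5, 1, 3, 8, 6, 17, 12, 2, 15, 20],
   [10, 0, 7, 4, 14, 18, 16, 3, 9, 13, 11, 19, 5, 1, 20, 8, 6, 17, 12, 2, 15],
   [16, 10, 0, 7, 4, 14, 18, 1, 3, 9, 13, 11, 19, 5, 15, 20, 8, 6, 17, 12, 2],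
   [18, 16, 10, 0, 7, 4, 14, 5, 1, 3, 9, 13, 11, 19, 2, 15, 20, 8, 6, 17, 12],
   [14, 18, 16, 10, 0, 7, 4, 19, 5, 1, 3, 9, 13, 11, 12, 2, 15, 20, 8, 6, 17],
   [4, 14, 18, 16, 10, 0, 7, 11, 19, 5, 1, 3, 9, 13, 17, 12, 2, 15, 20, 8, 6],
   [7, 4, 14, 18, 16, 10, 0, 13, 11, 19, 5, 1, 3, 9, 6, 17, 12, 2, 15, 20, 8]]

theorem dec0 : IsCycleDecomp K777 3 7 0 7 := by
  apply decomp_of_table 0 7 T0 <;> decide +kernel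

/-- Positions of the vertices in the factors of the decomposition with 1 triangle factors. -/
def T1 : List (List ℕ) :=
  [[0, 3, 6, 9, 12, 15, 18, 4, 7, 10, 13, 16, 19, 1, 14, 17, 20, 2, 5, 8, 11],
   [0, 2, 4, 7, 14, 19, 17, 16, 1, 3, 5, 8, 10, 12, 13, 15, 20, 18, 6, 9, 11],
   [0, 5, 3, 7, 14, 19, 17, 1, 12, 10, 8, 15, 20, 18, 2, 13, 11, 9, 16, 6, 4],
   [0, 2, 4, 7, 14, 19, 17, 10, 12, 16, 1, 3, 5, 8, 18, 6, 9, 11, 13, 15, 20],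
   [0, 5, 3, 7, 14, 19, 17, 20, 18, 1, 12, 10, 8, 15, 9, 16, 6, 4, 2, 13, 11],
   [0, 2, 4, 7, 14, 19, 17, 5, 8, 10, 12, 16, 1, 3, 9, 11, 13, 15, 20, 18, 6],
   [0, 5, 3, 7, 14, 19, 17, 8, 15, 20, 18, 1, 12, 10, 6, 4, 2, 13, 11, 9, 16]]

theorem dec1 : IsCycleDecomp K777 3 7 1 6 := by
  apply decomp_of_table 1 6 T1 <;> decide +kernel

/-- Positions of the vertices in the factors of the decomposition with 3 triangle factors. -/
def T3 : List (List ℕ) :=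
  [[0, 3, 6, 9, 12, 15, 18, 13, 16, 19, 1, 4, 7, 10, 17, 20, 2, 5, 8, 11, 14],
   [0, 3, 6, 9, 12, 15, 18, 7, 10, 13, 16, 19, 1, 4, 2, 5, 8, 11, 14, 17, 20],
   [0, 3, 6, 9, 12, 15, 18, 4, 7, 10, 13, 16, 19, 1, 14, 17, 20, 2, 5, 8, 11],
   [0, 2, 4, 7, 14, 19, 17, 16, 1, 3, 5, 8, 10, 12, 13, 15, 20, 18, 6, 9, 11],
   [0, 5, 3, 7, 14, 19, 17, 1, 12, 10, 8, 15, 20, 18, 2, 13, 11, 9, 16, 6, 4],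
   [0, 14, 2, 19, 4, 17, 7, 12, 5, 16, 8, 1, 10, 3, 15, 9, 20, 11, 18, 13, 6],
   [0, 14, 5, 19, 3, 17, 7, 18, 8, 1, 15, 12, 20, 10, 13, 6, 11, 4, 9, 2, 16]]

theorem dec3 : IsCycleDecomp K777 3 7 3 4 := by
  apply decomp_of_table 3 4 T3 <;> decide +kernel

/-- Positions of the vertices in the factors of the decomposition with 5 triangle factors. -/
def T5 : List (List ℕ) :=
  [[0, 3, 6, 9, 12, 15, 18, 16, 19, 1, 4, 7, 10, 13, 5, 8, 11, 14, 17, 20, 2],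
   [0, 3, 6, 9, 12, 15, 18, 13, 16, 19, 1, 4, 7, 10, 20, 2, 5, 8, 11, 14, 17],
   [0, 3, 6, 9, 12, 15, 18, 10, 13, 16, 19, 1, 4, 7, 14, 17, 20, 2, 5, 8, 11],
   [0, 3, 6, 9, 12, 15, 18, 7, 10, 13, 16, 19, 1, 4, 2, 5, 8, 11, 14, 17, 20],
   [0, 3, 6, 9, 12, 15, 18, 4, 7, 10, 13, 16, 19, 1, 17, 20, 2, 5, 8, 11, 14],
   [0, 2, 4, 7, 14, 19, 17, 16, 1, 3, 5, 8, 10, 12, 13, 15, 20, 18, 6, 9, 11],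
   [0, 5, 3, 7, 14, 19, 17, 1, 12, 10, 8, 15, 20, 18, 2, 13, 11, 9, 16, 6, 4]]

theorem dec5 : IsCycleDecomp K777 3 7 5 2 := by
  apply decomp_of_table 5 2 T5 <;> decide +kernel

/-- Positions of the vertices in the factors of the decomposition with 7 triangle factors. -/
def T7 : List (List ℕ) :=
  [[0, 3, 6, 9, 12, 15, 18, 1, 4, 7, 10, 13, 16, 19, 2, 5, 8, 11, 14, 17, 20],
   [0, 3, 6, 9, 12, 15, 18, 19, 1, 4, 7, 10, 13, 16, 17, 20, 2, 5, 8, 11, 14],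
   [0, 3, 6, 9, 12, 15, 18, 16, 19, 1, 4, 7, 10, 13, 11, 14, 17, 20, 2, 5, 8],
   [0, 3, 6, 9, 12, 15, 18, 13, 16, 19, 1, 4, 7, 10, 5, 8, 11, 14, 17, 20, 2],
   [0, 3, 6, 9, 12, 15, 18, 10, 13, 16, 19, 1, 4, 7, 20, 2, 5, 8, 11, 14, 17],
   [0, 3, 6, 9, 12, 15, 18, 7, 10, 13, 16, 19, 1, 4, 14, 17, 20, 2, 5, 8, 11],
   [0, 3, 6, 9, 12, 15, 18, 4, 7, 10, 13, 16, 19, 1, 8, 11, 14, 17, 20, 2, 5]]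

theorem dec7 : IsCycleDecomp K777 3 7 7 0 := by
  apply decomp_of_table 7 0 T7 <;> decide +kernel

end K777Aux

/-- Lemma 2.7: `(K_{7,7,7}; C₃^α, C₇^β)` exists for `α ∈ {0,1,3,5,7}` with `α + β = 7`. -/
theorem K777_cycle_decomp (α β : ℕ) (hα : α ∈ ({0, 1, 3, 5, 7} : Set ℕ))
    (hαβ : α + β = 7) :
    IsCycleDecomp K777 3 7 α β := by
  obtain rfl : β = 7 - α := by omega
  simp only [Set.mem_insert_iff, Set.mem_singleton_iff] at hα
  rcases hα with rfl | rfl | rfl | rfl | rfl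
  · exact K777Aux.dec0
  · exact K777Aux.dec1
  · exact K777Aux.dec3
  · exact K777Aux.dec5
  · exact K777Aux.dec7
end

section
/- Let t ≥ 0 and n = 42t + 21. The edge set of the complete graph K_n can be partitioned into 3t K_{7,7,7}-factors and one K₂₁-factor; that is, (K_n; K_{7,7,7}^{3t}, K₂₁) exists. -/
open SimpleGraph

/-- A partition of the edge set of `G` into `a` `H₁`-factors and `b` `H₂`-factors,
denoted `(G; H₁^a, H₂^b)`. -/
def IsFactorDecomp {V W₁ W₂ : Type*} (G : SimpleGraph V)
    (H₁ : SimpleGraph W₁) (H₂ : SimpleGraph W₂) (a b : ℕ) : Prop :=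
  ∃ F : Fin a ⊕ Fin b → SimpleGraph V,
    (∀ i, F i ≤ G) ∧
    (∀ e ∈ G.edgeSet, ∃! i, e ∈ (F i).edgeSet) ∧
    (∀ i : Fin a, IsHFactor H₁ (F (Sum.inl i))) ∧
    (∀ j : Fin b, IsHFactor H₂ (F (Sum.inr j)))

section KirkmanDefs

/-- `n c` cyclically permutes every triple of the `c`-th parallel class. -/
def IsK {P C : Type*} (n : C → P → P) : Prop :=
  (∀ c p, n c (n c (n c p)) = p) ∧ ∀ p q, p ≠ q → ∃ c, n c p = q ∨ n c q = p

/-- Kirkman frame with groups indexed by `X`. -/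
def IsFr {P C X : Type*} (gp : P → X) (gc : C → X) (n : C → P → P) : Prop :=
  (∀ c p, gp p ≠ gc c → gp (n c p) ≠ gc c ∧ n c (n c (n c p)) = p) ∧
  ∀ p q, gp p ≠ gp q → ∃ c, gp p ≠ gc c ∧ gp q ≠ gc c ∧ (n c p = q ∨ n c q = p)

/-- A Kirkman triple system on `6t+3` points. -/
def KTS (t : ℕ) : Prop :=
  ∃ n : Fin (3 * t + 1) → Fin (6 * t + 3) → Fin (6 * t + 3), IsK n

end KirkmanDefs

theorem IsK.transport {P C P' C' : Type*} {n : C → P → P} (h : IsK n)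
    (e : P ≃ P') (f : C ≃ C') : IsK (fun c' p' => e (n (f.symm c') (e.symm p'))) := by
  refine ⟨fun c p => by simp [h.1], fun p q hpq => ?_⟩
  obtain ⟨c, hc⟩ := h.2 (e.symm p) (e.symm q) (by simpa using hpq)
  refine ⟨f c, ?_⟩
  rcases hc with hc | hc
  · left; simp [hc]
  · right; simp [hc]

theorem KTS.of_isK {P C : Type*} [Fintype P] [Fintype C] {n : C → P → P} (h : IsK n) {t : ℕ}
    (hP : Fintype.card P = 6 * t + 3) (hC : Fintype.card C = 3 * t + 1) : KTS t :=
  ⟨_, h.transport (Fintype.equivFinOfCardEq hP) (Fintype.equivFinOfCardEq hC)⟩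

theorem IsK.count {P C : Type*} [Fintype P] [Fintype C] {n : C → P → P} (h : IsK n)
    (hc : Fintype.card P = 2 * Fintype.card C + 1) (p : P) :
    (∀ c, n c p ≠ p) ∧ (∀ c c', n c p = n c' p → c = c') ∧ (∀ c c', n c p ≠ n c' (n c' p)) ∧
    (∀ c c', n c (n c p) = n c' (n c' p) → c = c') := by
  classical
  let φ : C × Bool → P := fun x => if x.2 then n x.1 p else n x.1 (n x.1 p)
  have hsub : Finset.univ.erase p ⊆ Finset.univ.image φ := by
    intro q hq
    have hq' : q ≠ p := by simpa using hq
    obtain ⟨c, hc | hc⟩ := h.2 p q hq'.symm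
    · exact Finset.mem_image.2 ⟨(c, true), by simp, by simp [φ, hc]⟩
    · refine Finset.mem_image.2 ⟨(c, false), by simp, ?_⟩
      have := h.1 c q
      simp only [φ]
      rw [hc] at this
      simpa using this
  have hcard : (Finset.univ.erase p).card = 2 * Fintype.card C := by
    rw [Finset.card_erase_of_mem (Finset.mem_univ _), Finset.card_univ, hc]; simp
  have hle : (Finset.univ.image φ).card ≤ 2 * Fintype.card C := by
    refine Finset.card_image_le.trans ?_
    simp [mul_comm]
  have heq : Finset.univ.erase p = Finset.univ.image φ :=
    Finset.eq_of_subset_of_card_le hsub (by omega)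
  have hinj : Function.Injective φ := by
    have : Set.InjOn φ ((Finset.univ : Finset (C × Bool)) : Set (C × Bool)) := by
      apply Finset.injOn_of_card_image_eq
      rw [← heq, hcard]; simp [mul_comm]
    intro x y hxy
    exact this (by simp) (by simp) hxy
  have hne : ∀ x, φ x ≠ p := by
    intro x
    have : φ x ∈ Finset.univ.erase p := by rw [heq]; exact Finset.mem_image_of_mem _ (by simp)
    simpa using this
  refine ⟨fun c => by simpa [φ] using hne (c, true), fun c c' hcc => ?_, fun c c' hcc => ?_,
    fun c c' hcc => ?_⟩
  · have := @hinj (c, true) (c', true) (by simpa [φ] using hcc)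
    simpa using this
  · have := @hinj (c, true) (c', false) (by simpa [φ] using hcc)
    simp at this
  · have := @hinj (c, false) (c', false) (by simpa [φ] using hcc)
    simpa using this

/-- Filling the groups of a frame. -/
theorem IsFr.fill {P C X Z Y : Type*} {gp : P → X} {gc : C → X} {n : C → P → P}
    (h : IsFr gp gc n) (s : Y → Z → Z) (hs : IsK s)
    (hN : ∀ x : X, ∃ N : ({c // gc c = x} ⊕ Y) → ({p // gp p = x} ⊕ Z) → ({p // gp p = x} ⊕ Z),
      IsK N ∧ ∀ y z, N (Sum.inr y) (Sum.inr z) = Sum.inr (s y z)) :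
    ∃ M : (C ⊕ Y) → (P ⊕ Z) → (P ⊕ Z), IsK M := by
  classical
  choose N hK hNs using hN
  let lift : ∀ x : X, ({p // gp p = x} ⊕ Z) → P ⊕ Z := fun x => Sum.map Subtype.val id
  let M : (C ⊕ Y) → (P ⊕ Z) → (P ⊕ Z) := fun c p =>
    match c, p with
    | Sum.inl c, Sum.inl p =>
      if hh : gp p = gc c then lift (gc c) (N (gc c) (Sum.inl ⟨c, rfl⟩) (Sum.inl ⟨p, hh⟩))
      else Sum.inl (n c p)
    | Sum.inl c, Sum.inr z => lift (gc c) (N (gc c) (Sum.inl ⟨c, rfl⟩) (Sum.inr z))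
    | Sum.inr y, Sum.inl p => lift (gp p) (N (gp p) (Sum.inr y) (Sum.inl ⟨p, rfl⟩))
    | Sum.inr y, Sum.inr z => Sum.inr (s y z)
  have hM1 : ∀ x (c : {c // gc c = x}) (p : {p // gp p = x} ⊕ Z),
      M (Sum.inl c.1) (lift x p) = lift x (N x (Sum.inl c) p) := by
    rintro x ⟨c, rfl⟩ (⟨p, hp⟩ | z)
    · simp [M, lift, hp]
    · simp [M, lift]
  have hM2 : ∀ x (y : Y) (p : {p // gp p = x} ⊕ Z),
      M (Sum.inr y) (lift x p) = lift x (N x (Sum.inr y) p) := by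
    rintro x y (⟨p, rfl⟩ | z)
    · simp [M, lift]
    · simp [M, lift, hNs]
  have hM3 : ∀ c p, gp p ≠ gc c → M (Sum.inl c) (Sum.inl p) = Sum.inl (n c p) := by
    intro c p hcp
    simp [M, hcp]
  have hcov : ∀ x (p q : {p // gp p = x} ⊕ Z), lift x p ≠ lift x q →
      ∃ c, M c (lift x p) = lift x q ∨ M c (lift x q) = lift x p := by
    intro x p q hpq
    obtain ⟨c, hc⟩ := (hK x).2 p q (fun e => hpq (by rw [e]))
    rcases c with c | y
    · refine ⟨Sum.inl c.1, ?_⟩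
      rw [hM1, hM1]
      rcases hc with hc | hc
      · left; rw [hc]
      · right; rw [hc]
    · refine ⟨Sum.inr y, ?_⟩
      rw [hM2, hM2]
      rcases hc with hc | hc
      · left; rw [hc]
      · right; rw [hc]
  refine ⟨M, ?_, ?_⟩
  · rintro (c | y) p
    · by_cases hp : ∃ p', p = lift (gc c) p'
      · obtain ⟨p', rfl⟩ := hp
        have e := hM1 (gc c) ⟨c, rfl⟩
        simp only at e
        rw [e, e, e, (hK _).1]
      · rcases p with p | z
        · have hne : gp p ≠ gc c := fun e => hp ⟨Sum.inl ⟨p, e⟩, rfl⟩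
          have h1 := h.1 c p hne
          have h2 := h.1 c _ h1.1
          rw [hM3 _ _ hne, hM3 _ _ h1.1, hM3 _ _ h2.1, h1.2]
        · exact absurd ⟨Sum.inr z, rfl⟩ hp
    · rcases p with p | z
      · have e := hM2 (gp p) y
        have e0 : (Sum.inl p : P ⊕ Z) = lift (gp p) (Sum.inl ⟨p, rfl⟩) := rfl
        rw [e0, e, e, e, (hK _).1]
      · simp [M, hs.1]
  · rintro (p | z) (q | z') hpq
    · by_cases hg : gp p = gp q
      · exact hcov (gp q) (Sum.inl ⟨p, hg⟩) (Sum.inl ⟨q, rfl⟩) hpq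
      · obtain ⟨c, h1, h2, h3⟩ := h.2 p q hg
        refine ⟨Sum.inl c, ?_⟩
        rw [hM3 _ _ h1, hM3 _ _ h2]
        simpa using h3
    · exact hcov (gp p) (Sum.inl ⟨p, rfl⟩) (Sum.inr z') hpq
    · exact hcov (gp q) (Sum.inr z) (Sum.inl ⟨q, rfl⟩) hpq
    · obtain ⟨y, hy⟩ := hs.2 z z' (fun e => hpq (by rw [e]))
      exact ⟨Sum.inr y, by simpa [M] using hy⟩

/-- A Kirkman triple system can be renamed so that a given block is the standard one. -/
theorem KTS.normalize {t : ℕ} (h : KTS t) {P C : Type*} [Fintype P] [Fintype C]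
    (hP : Fintype.card P = 6 * t) (hC : Fintype.card C = 3 * t) :
    ∃ N : (C ⊕ Unit) → (P ⊕ Fin 3) → (P ⊕ Fin 3),
      IsK N ∧ ∀ y z, N (Sum.inr y) (Sum.inr z) = Sum.inr (z + 1) := by
  classical
  obtain ⟨n, hn⟩ := h
  let p0 : Fin (6 * t + 3) := ⟨0, by omega⟩
  let c0 : Fin (3 * t + 1) := ⟨0, by omega⟩
  have hcnt := hn.count (by simp; omega)
  let f : Fin 3 → Fin (6 * t + 3) := ![p0, n c0 p0, n c0 (n c0 p0)]
  have hf3 : ∀ z, n c0 (f z) = f (z + 1) := by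
    intro z
    fin_cases z
    · simp [f]
    · simp [f]
    · simpa [f] using hn.1 c0 p0
  have hfinj : Function.Injective f := by
    have h1 := (hcnt p0).1 c0
    have h2 := (hcnt (n c0 p0)).1 c0
    have h3 := (hcnt (n c0 (n c0 p0))).1 c0
    rw [hn.1] at h3
    intro a b hab
    fin_cases a <;> fin_cases b <;> simp [f] at hab ⊢ <;> first | exact h1 hab.symm | exact h2 hab.symm | exact h3 hab | exact h1 hab | exact h2 hab | exact h3 hab.symm
  obtain ⟨e, he⟩ := Finset.exists_equiv_extend_of_card_eq (α := P ⊕ Fin 3)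
    (β := Fin (6 * t + 3)) (t := Finset.univ) (by simp [hP])
    (s := Finset.univ.image Sum.inr) (f := Sum.elim (fun _ => p0) f) (by simp)
    (by
      rintro x hx y hy hxy
      simp at hx hy
      obtain ⟨a, rfl⟩ := hx
      obtain ⟨b, rfl⟩ := hy
      simp at hxy
      rw [hfinj hxy])
  obtain ⟨k, hk⟩ := Finset.exists_equiv_extend_of_card_eq (α := C ⊕ Unit)
    (β := Fin (3 * t + 1)) (t := Finset.univ) (by simp [hC])
    (s := {Sum.inr ()}) (f := fun _ => c0) (by simp) (by simp)
  let e' : P ⊕ Fin 3 ≃ Fin (6 * t + 3) := e.trans (Equiv.subtypeUnivEquiv (by simp))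
  let k' : C ⊕ Unit ≃ Fin (3 * t + 1) := k.trans (Equiv.subtypeUnivEquiv (by simp))
  have he' : ∀ z, e' (Sum.inr z) = f z := by
    intro z
    have := he (Sum.inr z) (by simp)
    simpa [e'] using this
  have hk' : k' (Sum.inr ()) = c0 := by
    have := hk (Sum.inr ()) (by simp)
    simpa [k'] using this
  refine ⟨_, hn.transport e'.symm k'.symm, ?_⟩
  rintro ⟨⟩ z
  simp only [Equiv.symm_symm, hk', he', hf3]
  rw [← he', Equiv.symm_apply_apply]

theorem isK_three : IsK (fun (_ : Unit) (z : Fin 3) => z + 1) := by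
  refine ⟨?_, ?_⟩
  · decide
  · decide

/-- Frame plus Kirkman triple systems on groups. -/
theorem IsFr.kts {P C X : Type*} [Fintype P] [Fintype C] {gp : P → X} {gc : C → X}
    {n : C → P → P} (h : IsFr gp gc n) {t : ℕ}
    (hP : Fintype.card P = 6 * t) (hC : Fintype.card C = 3 * t)
    (hx : ∀ x : X, ∃ m, KTS m ∧ Nat.card {p // gp p = x} = 6 * m ∧
      Nat.card {c // gc c = x} = 3 * m) : KTS t := by
  classical
  obtain ⟨M, hM⟩ := h.fill _ isK_three (fun x => by
    obtain ⟨m, hm, h1, h2⟩ := hx x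
    rw [Nat.card_eq_fintype_card] at h1 h2
    exact hm.normalize h1 h2)
  exact KTS.of_isK hM (by simp [hP]) (by simp [hC])

theorem isK_fin_three {C P : Type*} [Unique C] [Fintype P] (hP : Fintype.card P = 3) :
    ∃ n : C → P → P, IsK n := by
  have e := (Fintype.equivFinOfCardEq hP).symm
  exact ⟨_, isK_three.transport e (Equiv.ofUnique Unit C)⟩

/-- Frame with groups of size two plus one point. -/
theorem IsFr.kts_one {P C X : Type*} [Fintype P] [Fintype C] {gp : P → X} {gc : C → X}
    {n : C → P → P} (h : IsFr gp gc n) {t : ℕ}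
    (hP : Fintype.card P = 6 * t + 2) (hC : Fintype.card C = 3 * t + 1)
    (hx : ∀ x : X, Nat.card {p // gp p = x} = 2 ∧ Nat.card {c // gc c = x} = 1) : KTS t := by
  classical
  obtain ⟨M, hM⟩ := h.fill (Y := Empty) (Z := Unit) (fun y => y.elim)
    ⟨fun c => c.elim, fun p q hpq => absurd rfl hpq⟩ (fun x => by
    obtain ⟨h1, h2⟩ := hx x
    rw [Nat.card_eq_fintype_card] at h1 h2
    have : Fintype.card ({c // gc c = x} ⊕ Empty) = 1 := by simp [h2]
    obtain ⟨u, hu⟩ := Fintype.card_eq_one_iff.1 this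
    have : Unique ({c // gc c = x} ⊕ Empty) := ⟨⟨u⟩, hu⟩
    obtain ⟨N, hN⟩ := isK_fin_three (C := {c // gc c = x} ⊕ Empty)
      (P := {p // gp p = x} ⊕ Unit) (by simp [h1])
    exact ⟨N, hN, fun y => y.elim⟩)
  exact KTS.of_isK hM (by simp [hP]) (by simp [hC])

/-- Inflating a frame by three. -/
theorem IsFr.inflate {P C X : Type*} {gp : P → X} {gc : C → X}
    {n : C → P → P} (h : IsFr gp gc n) :
    IsFr (fun p : P × Fin 3 => gp p.1) (fun c : C × Fin 3 => gc c.1)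
      (fun c p => (n c.1 p.1, p.2 + c.2)) := by
  have h3 : ∀ a b : Fin 3, a + b + b + b = a := by decide
  refine ⟨?_, ?_⟩
  · rintro ⟨c, e⟩ ⟨p, a⟩ hpc
    exact ⟨(h.1 c p hpc).1, by simp [(h.1 c p hpc).2, h3]⟩
  · rintro ⟨p, a⟩ ⟨q, b⟩ hpq
    obtain ⟨c, h1, h2, h4 | h4⟩ := h.2 p q hpq
    · exact ⟨(c, b - a), h1, h2, Or.inl (by simp [h4])⟩
    · exact ⟨(c, a - b), h1, h2, Or.inr (by simp [h4])⟩


/-- The `p`-th digit of `T` in base `256`. -/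
def digit (T p : ℕ) : ℕ := T / 256 ^ p % 256

/-- The table `T` (digits in base 256) describes a starter of a frame in `ZMod n × Fin 2`. -/
def starterCheck (n t T : ℕ) : Bool :=
  ((List.range (2 * n)).all fun p => p % t == 0 || (decide (digit T p < 2 * n) &&
    !(digit T p % t == 0) && digit T (digit T (digit T p)) == p)) &&
  ((List.range 2).all fun i => (List.range 2).all fun j => (List.range n).all fun d =>
    d % t == 0 || (List.range n).any fun a => !(a % t == 0) && !((a + d) % t == 0) &&
    (digit T (a + n * i) == (a + d) % n + n * j || digit T ((a + d) % n + n * j) == a + n * i))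


theorem starter_check_7 : starterCheck 7 7
    61325079762860318423058074962944 = true := by
  decide +kernel

theorem starter_check_19 : starterCheck 19 19
    775894222912806139844218275262068258880897129469894392066643673918834254197495896485528064 = true := by
  decide +kernel

theorem starter_check_21 : starterCheck 21 7
    20866675594828682364680528088266253728532334675499046468276138553967544776955263493283326129661483776 = true := by
  decide +kernel

theorem starter_check_25 : starterCheck 25 25
    324713934643058605470834697795958018961997324335429480221795623588701358721568274640427528669196294203347138253871910400 = true := by
  decide +kernel

theorem starter_check_27 : starterCheck 27 9
    1262827118870813426916045940778929630095403162280192342621548574465635970304664685378707271054010971431168877713777315929825739776 = true := by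
  decide +kernel

theorem starter_check_31 : starterCheck 31 31
    29703573605892828372217745800179338046037737297448793454317319685342827132329988792002594774315306713564344630298305549430144966771285397563081171200 = true := by
  decide +kernel

theorem starter_check_33 : starterCheck 33 11
    44809169102845010520709047585810254584762515080246172429213511950012081031330917272949379645716637763790703771243473536300954885368227411481834433400413886720 = true := by
  decide +kernel

theorem starter_check_37 : starterCheck 37 37
    773181981282899886690118571892118596251822106375026862393954892819308788105158687488838613492369828370586420864363990674140535980880255217488357095840844641622958630211687023104 = true := by
  decide +kernel

theorem starter_check_39 : starterCheck 39 13
    12257615179492066232499954845518354906048321564388042769376978616049529088628571683702376522568027505891633896516728910865333919995446249553513862486770326665297431834876707635519590309888 = true := by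
  decide +kernel

theorem starter_check_43 : starterCheck 43 43
    71352239372363474405368499347855704499222671338566373938416853873229043091929701763483960973222118063136170357685645990282675160526116833944635666881185393719509721026945929935307676534716870929072077537792 = true := by
  decide +kernel

theorem starter_check_79 : starterCheck 79 79
    114655985987813528128018674013955391288267215116804800192608798798575534224420534038399203307717127664156150111191157591707278786244863702782052610541681030041506259102484347663380454332309823999034050543385381460753399732045124868875946662892093837423364925641406124264776326442049516572016404585739057457682425344967907108587392455525966246119567388490131343997390320549329049344 = true := by
  decide +kernel

/-- Table of a Kirkman frame of type `6^5`. -/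
def frameFive : ℕ :=
  2362210188811692304246171277362440750899966267827847088995130816993221138956162316747393098078871047107763846812158030428167992312164807874958866761089612946883032176002209440086268254909150303912554761919981128712856408687597833328421092384530950284769364038974743933362746554353860619888710023138533687488339681698314811764698382521016154885062581763681301724374728772384173281467163903147954809750808433158148731521718939300778972400612933554327383876343621609040733060688670806699607758446921772746222718142166576481901906160287863251878470673892351458335151856519839650134207024515509597594462353839512110464834165124009111166697072258992152151832812787662323712

/-- Table of a Kirkman frame of type `6^4`. -/
def frameFour : ℕ :=
  13934766244910052048932327184474031537136541245795178126490389775624577431501939393294248171982012839373896177100903423926149199210582447469216528470004675731461769757773936922884830638730722299777618579202332208731897771553571596527795605254017373720056592986786537895831133116469539087297544530165389056110271466808159224520494759579224713503281778319008052040751526462441095397930363389837878031310904274421056992311839670579984431792850675506425642460735016974464737507203360190034521271770653345997933067272217350373376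

/-- Table of a Kirkman triple system on 21 points. -/
def tableTwentyOne : ℕ :=
  4268261162697410545552539158616738869293556730838441246635042519851736192974772368358240375314563215439907613081462797085460580253046433815811210684444044295215975911764556229610979610667296225559449135169076257380883390630078822624224095929906077329301286087683608124368961471274724802127565723821337481798098462337


/-- Decoding of a frame table. -/
def frameFun (T : ℕ) (c : Fin 5 × Fin 3) (p : Fin 5 × Fin 6) : Fin 5 × Fin 6 :=
  (Fin.ofNat 5 (T / 32 ^ (30 * (3 * c.1.val + c.2.val) + 6 * p.1.val + p.2.val) % 32 / 6),
   Fin.ofNat 6 (T / 32 ^ (30 * (3 * c.1.val + c.2.val) + 6 * p.1.val + p.2.val) % 32 % 6))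

/-- `T` is the table of a frame with groups the `h : Fin 5` with `b ∨ h ≠ 4`. -/
def FrameCheck (b : Bool) (T : ℕ) : Prop :=
  (∀ c1 c2 p1 p2, (b ∨ c1 ≠ 4) → (b ∨ p1 ≠ 4) → p1 ≠ c1 →
    (b ∨ (frameFun T (c1, c2) (p1, p2)).1 ≠ 4) ∧ (frameFun T (c1, c2) (p1, p2)).1 ≠ c1 ∧
    frameFun T (c1, c2) (frameFun T (c1, c2) (frameFun T (c1, c2) (p1, p2))) = (p1, p2)) ∧
  (∀ p1 p2 q1 q2, (b ∨ p1 ≠ 4) → (b ∨ q1 ≠ 4) → p1 ≠ q1 →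
    ∃ c1 c2, (b ∨ c1 ≠ 4) ∧ p1 ≠ c1 ∧ q1 ≠ c1 ∧
      (frameFun T (c1, c2) (p1, p2) = (q1, q2) ∨ frameFun T (c1, c2) (q1, q2) = (p1, p2)))

set_option synthInstance.maxHeartbeats 400000 in
set_option synthInstance.maxSize 2000 in
theorem frameFive_check : FrameCheck true frameFive := by
  unfold FrameCheck
  constructor
  · decide +kernel
  · decide +kernel

set_option synthInstance.maxHeartbeats 400000 in
set_option synthInstance.maxSize 2000 in
theorem frameFour_check : FrameCheck false frameFour := by
  unfold FrameCheck
  constructor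
  · decide +kernel
  · decide +kernel

theorem kts_zero : KTS 0 := by
  refine ⟨fun _ z => z + 1, ?_, ?_⟩
  · decide
  · decide

theorem kts_one : KTS 1 := by
  have h : IsK (fun (c : Fin 4) (p : Fin 3 × Fin 3) =>
      (p.1 + (![1, 0, 1, 1] : Fin 4 → Fin 3) c, p.2 + (![0, 1, 1, 2] : Fin 4 → Fin 3) c)) := by
    refine ⟨?_, ?_⟩
    · decide +kernel
    · decide +kernel
  exact KTS.of_isK h (by simp) (by simp)

theorem kts_three : KTS 3 := by
  refine ⟨fun c p => Fin.ofNat 21 (tableTwentyOne / 32 ^ (21 * c.val + p.val) % 32), ?_, ?_⟩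
  · decide +kernel
  · decide +kernel


/-- Developing a starter through an abelian group. -/
theorem isFr_develop {G Q I : Type*} [AddCommGroup G] [AddCommGroup Q] (q : G →+ Q)
    (s : G × I → G × I)
    (h1 : ∀ p, q p.1 ≠ 0 → q (s p).1 ≠ 0 ∧ s (s (s p)) = p)
    (h2 : ∀ i j d, q d ≠ 0 → ∃ a, q a ≠ 0 ∧ q (a + d) ≠ 0 ∧
      (s (a, i) = (a + d, j) ∨ s (a + d, j) = (a, i))) :
    IsFr (fun p : G × I => q p.1) (fun c : G => q c)
      (fun c p => ((s (p.1 - c, p.2)).1 + c, (s (p.1 - c, p.2)).2)) := by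
  refine ⟨?_, ?_⟩
  · rintro c ⟨a, i⟩ hne
    have h0 : q (a - c) ≠ 0 := by
      rw [map_sub]; exact sub_ne_zero.2 hne
    obtain ⟨h3, h4⟩ := h1 (a - c, i) h0
    refine ⟨?_, ?_⟩
    · simp only [map_add]
      intro e
      exact h3 (by simpa using e)
    · simp only [add_sub_cancel_right, Prod.mk.eta, h4, sub_add_cancel]
  · rintro ⟨a, i⟩ ⟨b, j⟩ hne
    have h0 : q (b - a) ≠ 0 := by
      rw [map_sub]; exact sub_ne_zero.2 (Ne.symm hne)
    obtain ⟨a', h3, h4, h5⟩ := h2 i j (b - a) h0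
    refine ⟨a - a', ?_, ?_, ?_⟩
    · intro e
      have e' : q a = q (a - a') := e
      rw [map_sub] at e'
      exact h3 (sub_eq_self.1 e'.symm)
    · intro e
      apply h4
      have e' : q b = q (a - a') := e
      rw [map_sub] at e'
      rw [map_add, map_sub, e']; abel
    · have e1 : a - (a - a') = a' := by abel
      have e2 : b - (a - a') = a' + (b - a) := by abel
      have e3 : a' + (b - a) + (a - a') = b := by abel
      have e4 : a' + (a - a') = a := by abel
      simp only [e1, e2]
      rcases h5 with h5 | h5
      · left; simp only [h5, e3]
      · right; simp only [h5, e4]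

theorem starter_frame {n t T : ℕ} [NeZero n] (ht : t ∣ n) (h : starterCheck n t T = true) :
    ∃ f : ZMod n → ZMod n × Fin 2 → ZMod n × Fin 2,
      IsFr (fun p : ZMod n × Fin 2 => ZMod.castHom ht (ZMod t) p.1)
        (fun c : ZMod n => ZMod.castHom ht (ZMod t) c) f := by
  have hn : 0 < n := Nat.pos_of_ne_zero (NeZero.ne n)
  simp only [starterCheck, Bool.and_eq_true, List.all_eq_true, List.mem_range, Bool.or_eq_true,
    beq_iff_eq, decide_eq_true_eq, Bool.not_eq_true', beq_eq_false_iff_ne, List.any_eq_true] at h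
  obtain ⟨h1, h2⟩ := h
  let code : ZMod n × Fin 2 → ℕ := fun p => p.1.val + n * p.2.val
  let dec : ℕ → ZMod n × Fin 2 := fun m => ((m : ZMod n), Fin.ofNat 2 (m / n))
  have hcd : ∀ p, dec (code p) = p := by
    rintro ⟨a, i⟩
    have ha := ZMod.val_lt a
    have : (a.val + n * i.val) / n = i.val := by
      rw [Nat.add_mul_div_left _ _ hn, Nat.div_eq_of_lt ha, zero_add]
    ext
    · simp [dec, code]
    · simp only [dec, code, this]
      simp
  have hlt : ∀ p, code p < 2 * n := by
    rintro ⟨a, i⟩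
    have ha := ZMod.val_lt a
    have hi := i.isLt
    simp only [code]
    have : n * i.val ≤ n * 1 := Nat.mul_le_mul_left _ (by omega)
    omega
  have hdc : ∀ m < 2 * n, code (dec m) = m := by
    intro m hm
    simp only [dec, code, ZMod.val_natCast]
    have : m / n < 2 := Nat.div_lt_of_lt_mul (by omega)
    simp only [Fin.ofNat, Nat.mod_eq_of_lt this]
    exact Nat.mod_add_div m n
  have hq : ∀ m : ℕ, ZMod.castHom ht (ZMod t) (m : ZMod n) = 0 ↔ m % t = 0 := by
    intro m
    rw [map_natCast, ZMod.natCast_eq_zero_iff, Nat.dvd_iff_mod_eq_zero]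
  have hqc : ∀ p, ZMod.castHom ht (ZMod t) p.1 = 0 ↔ code p % t = 0 := by
    rintro ⟨a, i⟩
    rw [← hq]
    simp [code]
  refine ⟨_, isFr_develop (ZMod.castHom ht (ZMod t)).toAddMonoidHom
    (fun p => dec (digit T (code p))) ?_ ?_⟩
  · intro p hp
    have hp' : code p % t ≠ 0 := fun e => hp ((hqc p).2 e)
    have h3 := (h1 (code p) (hlt p)).resolve_left hp'
    have h4 := (h1 _ h3.1.1).resolve_left h3.1.2
    refine ⟨?_, ?_⟩
    · intro e
      have := (hqc _).1 e
      rw [hdc _ h3.1.1] at this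
      exact h3.1.2 this
    · simp only [hdc _ h3.1.1, hdc _ h4.1.1, h3.2, hcd]
  · intro i j d hd
    have hd' : d.val % t ≠ 0 := by
      intro e
      apply hd
      have := (hq d.val).2 e
      simpa using this
    obtain ⟨a, ha, ⟨h5, h6⟩, h7⟩ := (h2 i.val i.isLt j.val j.isLt d.val (ZMod.val_lt d)).resolve_left hd'
    have e1 : code ((a : ZMod n), i) = a + n * i.val := by
      simp [code, ZMod.val_natCast, Nat.mod_eq_of_lt ha]
    have e2 : code ((a : ZMod n) + d, j) = (a + d.val) % n + n * j.val := by
      simp [code, ZMod.val_add, ZMod.val_natCast]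
    refine ⟨(a : ZMod n), ?_, ?_, ?_⟩
    · intro e
      exact h5 ((hq a).1 e)
    · intro e
      apply h6
      have : ((a + d.val : ℕ) : ZMod n) = (a : ZMod n) + d := by simp
      exact (hq _).1 (by rw [this]; exact e)
    · simp only [e1, e2]
      rcases h7 with h7 | h7
      · left; rw [h7, ← e2, hcd]
      · right; rw [h7, ← e1, hcd]

theorem card_castHom_fiber {n t h : ℕ} [NeZero n] [NeZero t] (ht : t ∣ n) (hn : n = h * t)
    (x : ZMod t) : Nat.card {c : ZMod n // ZMod.castHom ht (ZMod t) c = x} = h := by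
  classical
  have hs := ZMod.castHom_surjective ht
  have hall : ∀ y : ZMod t, Nat.card {c : ZMod n // ZMod.castHom ht (ZMod t) c = y} =
      Nat.card {c : ZMod n // ZMod.castHom ht (ZMod t) c = x} := by
    intro y
    obtain ⟨a, rfl⟩ := hs y
    obtain ⟨b, rfl⟩ := hs x
    refine Nat.card_congr ((Equiv.addRight (b - a)).subtypeEquiv ?_)
    intro c
    simp only [Equiv.coe_addRight, map_add, map_sub]
    constructor
    · intro e; rw [e]; abel
    · intro e
      have := congrArg (fun z => z - (ZMod.castHom ht (ZMod t) b - ZMod.castHom ht (ZMod t) a)) e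
      simpa using this
  have h1 : Nat.card (Σ y : ZMod t, {c : ZMod n // ZMod.castHom ht (ZMod t) c = y}) = n := by
    rw [Nat.card_congr (Equiv.sigmaFiberEquiv _), Nat.card_zmod]
  rw [Nat.card_sigma, Finset.sum_congr rfl (fun y _ => hall y)] at h1
  simp only [Finset.sum_const, Finset.card_univ, ZMod.card, smul_eq_mul] at h1
  have ht0 : 0 < t := Nat.pos_of_ne_zero (NeZero.ne t)
  exact Nat.eq_of_mul_eq_mul_left ht0 (h1.trans (hn.trans (mul_comm _ _)))

theorem card_fst_fiber {A B X : Type*} (g : A → X) (x : X) :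
    Nat.card {p : A × B // g p.1 = x} = Nat.card {a : A // g a = x} * Nat.card B := by
  rw [← Nat.card_prod]
  exact Nat.card_congr
    { toFun := fun p => (⟨p.1.1, p.2⟩, p.1.2)
      invFun := fun p => ⟨(p.1.1, p.2), p.1.2⟩
      left_inv := fun _ => rfl
      right_inv := fun _ => rfl }

theorem kts_of_starter_one {t T : ℕ} (h : starterCheck (3 * t + 1) (3 * t + 1) T = true) :
    KTS t := by
  obtain ⟨f, hf⟩ := starter_frame (dvd_refl _) h
  refine hf.kts_one (by simp [ZMod.card]; ring) (by simp [ZMod.card]) (fun x => ?_)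
  rw [card_fst_fiber (fun c : ZMod (3 * t + 1) => ZMod.castHom (dvd_refl _) (ZMod (3 * t + 1)) c),
    card_castHom_fiber (h := 1) _ (by ring)]
  simp

theorem kts_of_starter_three {t T : ℕ} [NeZero t] (h : starterCheck (3 * t) t T = true) :
    KTS t := by
  have : NeZero (3 * t) := ⟨by have := NeZero.ne t; omega⟩
  obtain ⟨f, hf⟩ := starter_frame (Dvd.intro_left 3 rfl) h
  refine hf.kts (by simp [ZMod.card]; ring) (by simp [ZMod.card]) (fun x => ⟨1, kts_one, ?_⟩)
  rw [card_fst_fiber (fun c : ZMod (3 * t) => ZMod.castHom (Dvd.intro_left 3 rfl) (ZMod t) c),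
    card_castHom_fiber (h := 3) _ (by ring)]
  simp

theorem kts_triple_of_starter {t T : ℕ} [NeZero t] (h : starterCheck (3 * t) t T = true) :
    KTS (3 * t) := by
  have : NeZero (3 * t) := ⟨by have := NeZero.ne t; omega⟩
  obtain ⟨f, hf⟩ := starter_frame (Dvd.intro_left 3 rfl) h
  refine hf.inflate.kts (by simp [ZMod.card]; ring) (by simp [ZMod.card]; ring)
    (fun x => ⟨3, kts_three, ?_⟩)
  rw [card_fst_fiber (fun c : ZMod (3 * t) × Fin 2 =>
      ZMod.castHom (Dvd.intro_left 3 rfl) (ZMod t) c.1),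
    card_fst_fiber (fun c : ZMod (3 * t) => ZMod.castHom (Dvd.intro_left 3 rfl) (ZMod t) c),
    card_fst_fiber (fun c : ZMod (3 * t) => ZMod.castHom (Dvd.intro_left 3 rfl) (ZMod t) c),
    card_castHom_fiber (h := 3) _ (by ring)]
  simp

theorem kts_fifteen : KTS 15 := by
  have hf : IsFr (fun p : Fin 5 × Fin 6 => p.1) (fun c : Fin 5 × Fin 3 => c.1)
      (frameFun frameFive) := by
    obtain ⟨h1, h2⟩ := frameFive_check
    refine ⟨?_, ?_⟩
    · rintro ⟨c1, c2⟩ ⟨p1, p2⟩ hne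
      have := h1 c1 c2 p1 p2 (by simp) (by simp) hne
      exact ⟨this.2.1, this.2.2⟩
    · rintro ⟨p1, p2⟩ ⟨q1, q2⟩ hne
      obtain ⟨c1, c2, -, h3, h4, h5⟩ := h2 p1 p2 q1 q2 (by simp) (by simp) hne
      exact ⟨(c1, c2), h3, h4, h5⟩
  refine hf.inflate.kts (by simp) (by simp) (fun x => ⟨3, kts_three, ?_⟩)
  rw [card_fst_fiber (fun c : Fin 5 × Fin 6 => c.1), card_fst_fiber (fun c : Fin 5 × Fin 3 => c.1),
    card_fst_fiber (fun c : Fin 5 => c), card_fst_fiber (fun c : Fin 5 => c)]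
  simp

/-- Transversal designs with five groups, one of them truncated. -/
theorem kts_of_td {R L : Type*} [Fintype R] (pt : L → Fin 5 → R)
    (hTD : ∀ h h', h ≠ h' → ∀ a b, ∃! l, pt l h = a ∧ pt l h' = b) (U : Finset R)
    (hm : KTS (Fintype.card R)) (hu : KTS U.card) : KTS (4 * Fintype.card R + U.card) := by
  classical
  let X := {x : Fin 5 × R // x.1 = 4 → x.2 ∈ U}
  have hline : ∀ x y : X, ∃ l, x.1.1 ≠ y.1.1 → pt l x.1.1 = x.1.2 ∧ pt l y.1.1 = y.1.2 := by
    intro x y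
    by_cases hxy : x.1.1 = y.1.1
    · obtain ⟨l, -⟩ := hTD 0 1 (by decide) x.1.2 x.1.2
      exact ⟨l, fun e => absurd hxy e⟩
    · obtain ⟨l, hl, -⟩ := hTD _ _ hxy x.1.2 y.1.2
      exact ⟨l, fun _ => hl⟩
  choose line hl using hline
  have huniq : ∀ x y l, x.1.1 ≠ y.1.1 → pt l x.1.1 = x.1.2 → pt l y.1.1 = y.1.2 →
      line x y = l := by
    intro x y l hxy h1 h2
    exact (hTD _ _ hxy x.1.2 y.1.2).unique (hl x y hxy) ⟨h1, h2⟩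
  let full : L → Bool := fun l => decide (pt l 4 ∈ U)
  let tab : Bool → ℕ := fun b => if b then frameFive else frameFour
  have htab : ∀ b, FrameCheck b (tab b) := by
    intro b
    cases b
    · exact frameFour_check
    · exact frameFive_check
  have hval : ∀ l (h : Fin 5), (full l ∨ h ≠ 4) ↔ (h = 4 → pt l h ∈ U) := by
    intro l h
    simp only [full, decide_eq_true_eq]
    constructor
    · rintro h1 rfl
      simpa using h1
    · intro h1
      by_cases h4 : h = 4
      · left; rw [h4] at h1; exact h1 rfl
      · right; exact h4
  have hvx : ∀ l (x : X), pt l x.1.1 = x.1.2 → (full l ∨ x.1.1 ≠ 4) := by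
    intro l x hx
    rw [hval, hx]; exact x.2
  let n : X × Fin 3 → X × Fin 6 → X × Fin 6 := fun c p =>
    let l := line c.1 p.1
    let r := frameFun (tab (full l)) (c.1.1.1, c.2) (p.1.1.1, p.2)
    if hr : (r.1 = 4 → pt l r.1 ∈ U) then (⟨(r.1, pt l r.1), hr⟩, r.2) else p
  -- lifting of points of a line
  let up : ∀ l (r : Fin 5 × Fin 6), (full l ∨ r.1 ≠ 4) → X × Fin 6 := fun l r hr =>
    (⟨(r.1, pt l r.1), (hval l r.1).1 hr⟩, r.2)
  have hupeq : ∀ l r r' hr hr', r = r' → up l r hr = up l r' hr' := by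
    rintro l r r' hr hr' rfl; rfl
  have hn : ∀ l (c : X) (j : Fin 3) (r : Fin 5 × Fin 6) (hr : full l ∨ r.1 ≠ 4),
      pt l c.1.1 = c.1.2 → r.1 ≠ c.1.1 →
      ∀ hr' : (full l ∨ (frameFun (tab (full l)) (c.1.1, j) r).1 ≠ 4),
      n (c, j) (up l r hr) = up l (frameFun (tab (full l)) (c.1.1, j) r) hr' := by
    intro l c j r hr hc hne hr'
    have hll : line c (up l r hr).1 = l := huniq _ _ _ (Ne.symm hne) hc rfl
    have hr'' := (hval l _).1 hr'
    simp only [n, hll]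
    simp only [up]
    rw [dif_pos hr'']
  have hupx : ∀ l (x : X) (i : Fin 6) (hx : pt l x.1.1 = x.1.2),
      up l (x.1.1, i) (hvx l x hx) = (x, i) := by
    rintro l ⟨⟨h, a⟩, hh⟩ i hx
    simp only at hx
    subst hx
    rfl
  have hfr : IsFr (fun p : X × Fin 6 => p.1.1.1) (fun c : X × Fin 3 => c.1.1.1) n := by
    refine ⟨?_, ?_⟩
    · rintro ⟨c, j⟩ ⟨x, i⟩ hne
      simp only at hne
      obtain ⟨hc, hx⟩ := hl c x (Ne.symm hne)
      generalize line c x = l at hc hx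
      obtain ⟨t1, -⟩ := htab (full l)
      have a0 := hvx l x hx
      have ac := hvx l c hc
      obtain ⟨b1, b2, b3⟩ := t1 c.1.1 j x.1.1 i ac a0 hne
      generalize hr : frameFun (tab (full l)) (c.1.1, j) (x.1.1, i) = r at b1 b2 b3
      obtain ⟨c1, c2, c3⟩ := t1 c.1.1 j r.1 r.2 ac b1 b2
      simp only [Prod.mk.eta] at c1 c2 c3
      have e1 : n (c, j) (x, i) = up l r b1 := by
        rw [← hupx l x i hx, hn l c j (x.1.1, i) a0 hc hne (by rw [hr]; exact b1)]
        exact hupeq l _ _ (by rw [hr]; exact b1) b1 hr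
      have e2 := hn l c j r b1 hc b2 c1
      have e3 := hn l c j _ c1 hc c2 (by rw [b3]; exact a0)
      refine ⟨?_, ?_⟩
      · rw [e1]; exact b2
      · rw [e1, e2, e3, ← hupx l x i hx]
        exact hupeq l _ _ (by rw [b3]; exact a0) a0 b3
    · rintro ⟨x, i⟩ ⟨y, j⟩ hne
      simp only at hne
      obtain ⟨hx, hy⟩ := hl x y hne
      generalize line x y = l at hx hy
      obtain ⟨-, t2⟩ := htab (full l)
      have ax := hvx l x hx
      have ay := hvx l y hy
      obtain ⟨c1, c2, d1, d2, d3, d4⟩ := t2 x.1.1 i y.1.1 j ax ay hne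
      refine ⟨(⟨(c1, pt l c1), (hval l c1).1 d1⟩, c2), d2, d3, ?_⟩
      rcases d4 with d4 | d4
      · left
        rw [← hupx l x i hx, ← hupx l y j hy]
        rw [hn l ⟨(c1, pt l c1), (hval l c1).1 d1⟩ c2 _ ax rfl d2 (by rw [d4]; exact ay)]
        exact hupeq l _ _ (by rw [d4]; exact ay) ay d4
      · right
        rw [← hupx l x i hx, ← hupx l y j hy]
        rw [hn l ⟨(c1, pt l c1), (hval l c1).1 d1⟩ c2 _ ay rfl d3 (by rw [d4]; exact ax)]
        exact hupeq l _ _ (by rw [d4]; exact ax) ax d4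
  have hfib : ∀ h : Fin 5, Nat.card {x : X // x.1.1 = h} =
      if h = 4 then U.card else Fintype.card R := by
    intro h
    split_ifs with h4
    · subst h4
      rw [← Nat.card_eq_finsetCard U]
      exact Nat.card_congr
        { toFun := fun x => (⟨x.1.1.2, x.1.2 x.2⟩ : U)
          invFun := fun u => ⟨⟨(4, u.1), fun _ => u.2⟩, rfl⟩
          left_inv := by
            rintro ⟨⟨⟨h, a⟩, h1⟩, h2⟩
            simp only at h2
            subst h2
            rfl
          right_inv := fun _ => rfl }
    · rw [← Nat.card_eq_fintype_card]
      exact Nat.card_congr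
        { toFun := fun x => x.1.1.2
          invFun := fun a => ⟨⟨(h, a), fun e => absurd e h4⟩, rfl⟩
          left_inv := by rintro ⟨⟨⟨h, a⟩, h1⟩, rfl⟩; rfl
          right_inv := fun _ => rfl }
  have hX : Fintype.card X = 4 * Fintype.card R + U.card := by
    rw [← Nat.card_eq_fintype_card, ← Nat.card_congr (Equiv.sigmaFiberEquiv (fun x : X => x.1.1)),
      Nat.card_sigma]
    simp only [hfib]
    rw [Fin.sum_univ_five]
    simp only [if_true]
    rw [if_neg (by decide), if_neg (by decide), if_neg (by decide), if_neg (by decide)]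
    ring
  refine hfr.kts (by rw [Fintype.card_prod, hX]; simp [mul_comm])
    (by rw [Fintype.card_prod, hX]; simp [mul_comm]) (fun h => ?_)
  refine ⟨if h = 4 then U.card else Fintype.card R, ?_, ?_, ?_⟩
  · split_ifs
    · exact hu
    · exact hm
  · rw [card_fst_fiber (fun x : X => x.1.1), hfib]; simp [mul_comm]
  · rw [card_fst_fiber (fun x : X => x.1.1), hfib]; simp [mul_comm]


theorem kts_of_ring {R : Type*} [CommRing R] [Fintype R] (e : Fin 5 → R)
    (he : ∀ h h', h ≠ 4 → h' ≠ 4 → h ≠ h' → IsUnit (e h - e h'))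
    (u : ℕ) (hu : u ≤ Fintype.card R) (hm : KTS (Fintype.card R)) (hk : KTS u) :
    KTS (4 * Fintype.card R + u) := by
  classical
  obtain ⟨U, -, hU⟩ := Finset.exists_subset_card_eq (s := (Finset.univ : Finset R)) (n := u)
    (by simpa using hu)
  subst hU
  refine kts_of_td (L := R × R) (fun l h => if h = 4 then l.2 else l.1 + e h * l.2) ?_ U hm hk
  intro h h' hne a b
  by_cases h4 : h = 4
  · have h4' : h' ≠ 4 := fun e => hne (h4.trans e.symm)
    refine ⟨(b - e h' * a, a), by simp [h4, h4'], ?_⟩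
    rintro ⟨x, y⟩ ⟨h1, h2⟩
    simp only [h4, h4', if_true, if_false] at h1 h2
    subst h1
    rw [← h2]; simp
  · by_cases h4' : h' = 4
    · refine ⟨(a - e h * b, b), by simp [h4, h4'], ?_⟩
      rintro ⟨x, y⟩ ⟨h1, h2⟩
      simp only [h4, h4', if_true, if_false] at h1 h2
      subst h2
      rw [← h1]; simp
    · obtain ⟨v, hv⟩ := (he h h' h4 h4' hne).exists_right_inv
      refine ⟨(a - e h * (v * (a - b)), v * (a - b)), ?_, ?_⟩
      · simp only [h4, h4', if_false]
        constructor
        · ring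
        · linear_combination (b - a) * hv
      · rintro ⟨x, y⟩ ⟨h1, h2⟩
        simp only [h4, h4', if_false] at h1 h2
        have hy : y = v * (a - b) := by
          rw [← h1, ← h2]
          linear_combination (- y) * hv
        ext
        · simp only
          rw [← hy, ← h1]; ring
        · exact hy

theorem kts_of_field {F : Type*} [Field F] [Fintype F] (hF : 4 ≤ Fintype.card F)
    (u : ℕ) (hu : u ≤ Fintype.card F) (hm : KTS (Fintype.card F)) (hk : KTS u) :
    KTS (4 * Fintype.card F + u) := by
  have : Nonempty (Fin 4 ↪ F) := by
    apply Function.Embedding.nonempty_of_card_le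
    simpa using hF
  obtain ⟨g⟩ := this
  refine kts_of_ring (fun h => if hh : h.val < 4 then g ⟨h.val, hh⟩ else 0) ?_ u hu hm hk
  intro h h' h4 h4' hne
  have h1 : h.val < 4 := by omega
  have h2 : h'.val < 4 := by omega
  simp only [h1, h2, dif_pos]
  rw [isUnit_iff_ne_zero, sub_ne_zero]
  intro e
  have := g.injective e
  simp only [Fin.mk.injEq] at this
  exact hne (Fin.ext this)

theorem kts_of_zmod {m : ℕ} (hm6 : Nat.Coprime m 6) (u : ℕ) (hu : u ≤ m)
    (hm : KTS m) (hk : KTS u) : KTS (4 * m + u) := by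
  have : NeZero m := ⟨by rintro rfl; simp at hm6⟩
  have hc : Fintype.card (ZMod m) = m := ZMod.card m
  have h6 : IsUnit ((6 : ℕ) : ZMod m) := (ZMod.isUnit_iff_coprime 6 m).2 hm6.symm
  have h2 : IsUnit (2 : ZMod m) := isUnit_of_dvd_unit (y := ((6 : ℕ) : ZMod m)) ⟨3, by norm_num⟩ h6
  have h3 : IsUnit (3 : ZMod m) := isUnit_of_dvd_unit (y := ((6 : ℕ) : ZMod m)) ⟨2, by norm_num⟩ h6
  have key := kts_of_ring (R := ZMod m) (fun h => (h.val : ZMod m)) ?_ u (by rw [hc]; exact hu)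
    (by rw [hc]; exact hm) hk
  · rw [hc] at key; exact key
  have pos : ∀ a b : ℕ, a < b → b < 4 → IsUnit ((b : ZMod m) - a) := by
    intro a b hab hb
    have : (b : ZMod m) - a = ((b - a : ℕ) : ZMod m) := by rw [Nat.cast_sub hab.le]
    rw [this]
    have h : b - a = 1 ∨ b - a = 2 ∨ b - a = 3 := by omega
    rcases h with h | h | h <;> rw [h]
    · simp
    · exact_mod_cast h2
    · exact_mod_cast h3
  intro h h' h4 h4' hne
  rcases lt_or_gt_of_ne (fun e => hne (Fin.ext e) : h.val ≠ h'.val) with hl | hl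
  · have := pos h.val h'.val hl (by omega)
    rw [← neg_sub]
    exact this.neg
  · exact pos _ _ hl (by omega)

theorem kts_of_galois (p k m : ℕ) [Fact p.Prime] (hk0 : k ≠ 0) (hpm : p ^ k = m) (h4 : 4 ≤ m)
    (u : ℕ) (hu : u ≤ m) (hm : KTS m) (hk : KTS u) : KTS (4 * m + u) := by
  have : Fintype (GaloisField p k) := Fintype.ofFinite _
  have hc : Fintype.card (GaloisField p k) = m := by
    rw [← Nat.card_eq_fintype_card, GaloisField.card p k hk0, hpm]
  subst hc
  exact kts_of_field h4 u hu hm hk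

theorem kts_all (t : ℕ) : KTS t := by
  induction t using Nat.strong_induction_on with
  | _ t ih =>
    have Z : ∀ m, m < t → Nat.Coprime m 6 → 4 * m ≤ t → t ≤ 5 * m → KTS t := by
      intro m h1 h2 h3 h4
      obtain ⟨u, rfl⟩ := Nat.exists_eq_add_of_le h3
      exact kts_of_zmod h2 u (by omega) (ih _ h1) (ih _ (by omega))
    have G : ∀ p k m, p.Prime → k ≠ 0 → p ^ k = m → 4 ≤ m → 4 * m ≤ t → t ≤ 5 * m → KTS t := by
      intro p k m hp hk hpm h4 h3 h5
      have : Fact p.Prime := ⟨hp⟩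
      obtain ⟨u, rfl⟩ := Nat.exists_eq_add_of_le h3
      exact kts_of_galois p k m hk hpm h4 u (by omega) (ih _ (by omega)) (ih _ (by omega))
    by_cases hbig : 68 ≤ t
    · have hex : ∃ k, (4 * (6 * k + 1) ≤ t ∧ t ≤ 5 * (6 * k + 1)) ∨
          (4 * (6 * k + 5) ≤ t ∧ t ≤ 5 * (6 * k + 5)) := by
        by_cases hm : (t / 4) % 6 = 5
        · exact ⟨t / 4 / 6, by omega⟩
        · by_cases hm0 : (t / 4) % 6 = 0
          · exact ⟨t / 4 / 6 - 1, by omega⟩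
          · exact ⟨t / 4 / 6, by omega⟩
      obtain ⟨k, ⟨h1, h2⟩ | ⟨h1, h2⟩⟩ := hex
      · exact Z _ (by omega) (by
          rw [Nat.coprime_mul_left_add_left]; norm_num) h1 h2
      · exact Z _ (by omega) (by
          rw [Nat.coprime_mul_left_add_left]; norm_num) h1 h2
    · by_cases h16 : t < 16
      · have h4 : t = 4 ∨ t = 5 → KTS t := by
          intro h
          exact Z 1 (by omega) (by norm_num) (by omega) (by omega)
        interval_cases t
        · exact kts_zero
        · exact kts_one
        · exact kts_of_starter_one starter_check_7
        · exact kts_three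
        · exact h4 (by norm_num)
        · exact h4 (by norm_num)
        · exact kts_of_starter_one starter_check_19
        · exact kts_of_starter_three starter_check_21
        · exact kts_of_starter_one starter_check_25
        · exact kts_of_starter_three starter_check_27
        · exact kts_of_starter_one starter_check_31
        · exact kts_of_starter_three starter_check_33
        · exact kts_of_starter_one starter_check_37
        · exact kts_of_starter_three starter_check_39
        · exact kts_of_starter_one starter_check_43
        · exact kts_fifteen
      · by_cases h1 : t ≤ 20
        · exact G 2 2 4 Nat.prime_two (by norm_num) (by norm_num) le_rfl (by omega) (by omega)
        by_cases h2 : t ≤ 25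
        · exact Z 5 (by omega) (by norm_num) (by omega) (by omega)
        by_cases h3 : t = 26
        · subst h3; exact kts_of_starter_one starter_check_79
        by_cases h4 : t = 27
        · subst h4; exact kts_triple_of_starter (t := 9) starter_check_27
        by_cases h5 : t ≤ 35
        · exact Z 7 (by omega) (by norm_num) (by omega) (by omega)
        by_cases h6 : t ≤ 45
        · exact G 3 2 9 Nat.prime_three (by norm_num) (by norm_num) (by norm_num)
            (by omega) (by omega)
        by_cases h7 : t ≤ 55
        · exact Z 11 (by omega) (by norm_num) (by omega) (by omega)
        by_cases h8 : t ≤ 65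
        · exact Z 13 (by omega) (by norm_num) (by omega) (by omega)
        · exact G 2 4 16 Nat.prime_two (by norm_num) (by norm_num) (by norm_num)
            (by omega) (by omega)


theorem isHFactor_of_local {V W : Type*} {H : SimpleGraph W} {F : SimpleGraph V}
    (hH : H.Connected)
    (h : ∀ v, ∃ f : W → V, Function.Injective f ∧ (∃ x, f x = v) ∧
      (∀ x y, F.Adj (f x) (f y) ↔ H.Adj x y) ∧ ∀ x w, F.Adj (f x) w → ∃ y, f y = w) :
    IsHFactor H F := by
  intro c
  induction c using SimpleGraph.ConnectedComponent.ind with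
  | _ v =>
    obtain ⟨f, hinj, ⟨x0, hx0⟩, hadj, hcl⟩ := h v
    let g : H →g F := ⟨f, fun {a b} hab => (hadj a b).2 hab⟩
    have hmem : ∀ x, f x ∈ (F.connectedComponentMk v).supp := by
      intro x
      rw [SimpleGraph.ConnectedComponent.mem_supp_iff, SimpleGraph.ConnectedComponent.eq, ← hx0]
      exact (hH.preconnected x x0).map g
    have hsurj : ∀ w, w ∈ (F.connectedComponentMk v).supp → ∃ x, f x = w := by
      intro w hw
      rw [SimpleGraph.ConnectedComponent.mem_supp_iff, SimpleGraph.ConnectedComponent.eq] at hw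
      obtain ⟨p⟩ := hw.symm
      have key : ∀ {a b : V} (p : F.Walk a b), (∃ x, f x = a) → ∃ x, f x = b := by
        intro a b p
        induction p with
        | nil => exact id
        | cons hab _ ih =>
          rintro ⟨x, rfl⟩
          exact ih (hcl x _ hab)
      exact key p ⟨x0, hx0⟩
    let e : W ≃ (F.connectedComponentMk v).supp :=
      Equiv.ofBijective (fun x => ⟨f x, hmem x⟩)
        ⟨fun x y hxy => hinj (congrArg Subtype.val hxy),
          fun w => by
            obtain ⟨x, hx⟩ := hsurj w.1 w.2
            exact ⟨x, Subtype.ext hx⟩⟩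
    exact ⟨(RelIso.mk e (by
      intro a b
      exact hadj a b) : H ≃g _).symm⟩

theorem K777_connected : K777.Connected := by
  have : Nonempty (ZMod 7 × ZMod 3) := ⟨(0, 0)⟩
  refine ⟨?_⟩
  intro x y
  by_cases hxy : x.2 = y.2
  · have h1 : K777.Adj x (0, x.2 + 1) := by
      show x.2 ≠ x.2 + 1
      generalize x.2 = a
      revert a; decide
    have h2 : K777.Adj (0, x.2 + 1) y := by
      show x.2 + 1 ≠ y.2
      rw [← hxy]
      exact Ne.symm h1
    exact h1.reachable.trans h2.reachable
  · exact SimpleGraph.Adj.reachable (show K777.Adj x y from hxy)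

/-- The points of the triple through `p`. -/
def orb {P : Type*} (s : P → P) (p : P) (i : ZMod 3) : P :=
  if i = 0 then p else if i = 1 then s p else s (s p)

theorem orb_adj {P : Type*} {s : P → P} (h3 : ∀ p, s (s (s p)) = p) (hne : ∀ p, s p ≠ p)
    (p : P) (i j : ZMod 3) : (s (orb s p i) = orb s p j ∨ s (orb s p j) = orb s p i) ↔ i ≠ j := by
  have hne2 : ∀ p, s (s p) ≠ p := fun p e => hne p (by
    have := h3 p
    rw [e] at this
    exact this)
  have h0 : ∀ k : ZMod 3, s (orb s p k) = orb s p (k + 1) := by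
    intro k
    have : k = 0 ∨ k = 1 ∨ k = 2 := by revert k; decide
    have e1 : (1 : ZMod 3) ≠ 0 := by decide
    have e2 : (2 : ZMod 3) ≠ 0 := by decide
    have e3 : (2 : ZMod 3) ≠ 1 := by decide
    rcases this with rfl | rfl | rfl
    · simp [orb]
    · rw [show (1 + 1 : ZMod 3) = 2 from by decide]; simp [orb, e2, e3]
    · rw [show (2 + 1 : ZMod 3) = 0 from by decide]; simp [orb, e2, e3, h3]
  constructor
  · rintro h rfl
    exact hne _ (h.elim id id)
  · intro hij
    have : j = i + 1 ∨ i = j + 1 := by revert i j; decide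
    rcases this with rfl | rfl
    · left; exact h0 _
    · right; exact h0 _

theorem orb_injective {P : Type*} {s : P → P} (h3 : ∀ p, s (s (s p)) = p) (hne : ∀ p, s p ≠ p)
    (p : P) : Function.Injective (orb s p) := by
  intro i j hij
  by_contra hc
  have := (orb_adj h3 hne p i j).2 hc
  rw [hij] at this
  exact hne _ (this.elim id id)

theorem orb_closed {P : Type*} {s : P → P} (h3 : ∀ p, s (s (s p)) = p)
    (p q : P) (i : ZMod 3) (h : s (orb s p i) = q ∨ s q = orb s p i) : ∃ j, orb s p j = q := by
  have e1 : (1 : ZMod 3) ≠ 0 := by decide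
  have e2 : (2 : ZMod 3) ≠ 0 := by decide
  have e3 : (2 : ZMod 3) ≠ 1 := by decide
  have o0 : orb s p 0 = p := by simp [orb]
  have o1 : orb s p 1 = s p := by simp [orb, e1]
  have o2 : orb s p 2 = s (s p) := by simp [orb, e2, e3]
  have hi : i = 0 ∨ i = 1 ∨ i = 2 := by clear h; revert i; decide
  have h' : q = s (orb s p i) ∨ q = s (s (orb s p i)) := by
    rcases h with h | h
    · left; exact h.symm
    · right; rw [← h, h3]
  rcases hi with rfl | rfl | rfl
  · rw [o0] at h'
    rcases h' with h' | h'
    · exact ⟨1, by rw [o1, h']⟩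
    · exact ⟨2, by rw [o2, h']⟩
  · rw [o1] at h'
    rcases h' with h' | h'
    · exact ⟨2, by rw [o2, h']⟩
    · exact ⟨0, by rw [o0, h', h3]⟩
  · rw [o2] at h'
    rcases h' with h' | h'
    · exact ⟨0, by rw [o0, h', h3]⟩
    · exact ⟨1, by rw [o1, h', h3]⟩

/-- Blow-up of a parallel class. -/
def blowGraph {V P A : Type*} (e : V ≃ P × A) (s : P → P) (hne : ∀ p, s p ≠ p) :
    SimpleGraph V where
  Adj v w := s (e v).1 = (e w).1 ∨ s (e w).1 = (e v).1
  symm := ⟨fun _ _ h => h.symm⟩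
  loopless := ⟨fun _ h => hne _ (h.elim id id)⟩

/-- Blow-up of a parallel class together with the groups. -/
def blowFull {V P A : Type*} (e : V ≃ P × A) (s : P → P) : SimpleGraph V where
  Adj v w := v ≠ w ∧ ((e v).1 = (e w).1 ∨ s (e v).1 = (e w).1 ∨ s (e w).1 = (e v).1)
  symm := ⟨fun _ _ h => ⟨h.1.symm, h.2.imp Eq.symm Or.symm⟩⟩
  loopless := ⟨fun _ h => h.1 rfl⟩

theorem blowGraph_factor {V P : Type*} (e : V ≃ P × ZMod 7) (s : P → P) (hne : ∀ p, s p ≠ p)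
    (h3 : ∀ p, s (s (s p)) = p) : IsHFactor K777 (blowGraph e s hne) := by
  refine isHFactor_of_local K777_connected (fun v => ?_)
  refine ⟨fun x => e.symm (orb s (e v).1 x.2, x.1), ?_, ⟨((e v).2, 0), ?_⟩, ?_, ?_⟩
  · rintro ⟨a, i⟩ ⟨b, j⟩ h
    have h' := e.symm.injective h
    simp only [Prod.mk.injEq] at h'
    rw [h'.2, orb_injective h3 hne _ h'.1]
  · simp [orb]
  · rintro ⟨a, i⟩ ⟨b, j⟩
    simp only [blowGraph, K777, Equiv.apply_symm_apply]
    exact orb_adj h3 hne _ i j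
  · rintro ⟨a, i⟩ w hw
    simp only [blowGraph, Equiv.apply_symm_apply] at hw
    obtain ⟨j, hj⟩ := orb_closed h3 _ _ _ hw
    exact ⟨((e w).2, j), by simp [hj]⟩

theorem blowFull_factor {V P : Type*} (e : V ≃ P × ZMod 7) (s : P → P) (hne : ∀ p, s p ≠ p)
    (h3 : ∀ p, s (s (s p)) = p) :
    IsHFactor (⊤ : SimpleGraph (Fin 21)) (blowFull e s) := by
  have g : Fin 21 ≃ ZMod 7 × ZMod 3 := Fintype.equivOfCardEq (by simp [ZMod.card])
  refine isHFactor_of_local SimpleGraph.connected_top (fun v => ?_)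
  have hinj : Function.Injective (fun x : Fin 21 => e.symm (orb s (e v).1 (g x).2, (g x).1)) := by
    intro x y h
    have h' := e.symm.injective h
    simp only [Prod.mk.injEq] at h'
    exact g.injective (Prod.ext h'.2 (orb_injective h3 hne _ h'.1))
  refine ⟨fun x => e.symm (orb s (e v).1 (g x).2, (g x).1), hinj,
    ⟨g.symm ((e v).2, 0), ?_⟩, ?_, ?_⟩
  · simp [orb]
  · intro x y
    constructor
    · rintro ⟨h1, -⟩
      exact fun h => h1 (by rw [h])
    · intro hxy
      refine ⟨fun h => hxy (hinj h), ?_⟩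
      simp only [Equiv.apply_symm_apply]
      by_cases hij : (g x).2 = (g y).2
      · left; rw [hij]
      · right; exact (orb_adj h3 hne _ _ _).2 hij
  · rintro x w ⟨-, hw⟩
    simp only [Equiv.apply_symm_apply] at hw
    have : ∃ j, orb s (e v).1 j = (e w).1 := by
      rcases hw with hw | hw
      · exact ⟨_, hw⟩
      · exact orb_closed h3 _ _ _ hw
    obtain ⟨j, hj⟩ := this
    exact ⟨g.symm ((e w).2, j), by simp [hj]⟩

/-- Lemma 4.1: for `n = 42t + 21` with `t ≥ 0`, `(K_n; K_{7,7,7}^{3t}, K₂₁)` exists, i.e.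
the edge set of `K_n` can be partitioned into `3t` `K_{7,7,7}`-factors and one `K₂₁`-factor. -/
theorem Kn_K777_K21_decomp (t : ℕ) :
    IsFactorDecomp (⊤ : SimpleGraph (Fin (42 * t + 21))) K777
      (⊤ : SimpleGraph (Fin 21)) (3 * t) 1 := by
  obtain ⟨n, hn⟩ := kts_all t
  have hcount := hn.count (by simp; ring)
  have hne : ∀ c p, n c p ≠ p := fun c p => (hcount p).1 c
  have h3 := hn.1
  have e : Fin (42 * t + 21) ≃ Fin (6 * t + 3) × ZMod 7 :=
    Fintype.equivOfCardEq (by simp [ZMod.card]; ring)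
  have huniq : ∀ c c' p q, (n c p = q ∨ n c q = p) → (n c' p = q ∨ n c' q = p) → c = c' := by
    intro c c' p q h h'
    obtain ⟨-, k1, k2, k3⟩ := hcount p
    have inv : ∀ c, n c q = p → n c (n c p) = q := by
      intro c hc
      rw [← hc, h3]
    rcases h with h | h <;> rcases h' with h' | h'
    · exact k1 _ _ (h.trans h'.symm)
    · exact absurd (h.trans (inv _ h').symm) (k2 c c')
    · exact absurd (h'.trans (inv _ h).symm) (k2 c' c)
    · exact k3 _ _ ((inv _ h).trans (inv _ h').symm)
  refine ⟨Sum.elim (fun i => blowGraph e (n i.castSucc) (hne _))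
    (fun _ => blowFull e (n (Fin.last _))), fun _ => le_top, ?_, ?_, ?_⟩
  · intro a
    induction a using Sym2.ind with
    | _ v w =>
      intro hvw
      have hvw' : v ≠ w := by simpa using hvw
      simp only [SimpleGraph.mem_edgeSet]
      by_cases hp : (e v).1 = (e w).1
      · refine ⟨Sum.inr 0, ⟨hvw', Or.inl hp⟩, ?_⟩
        rintro (i | j) h
        · have h' : n i.castSucc (e v).1 = (e w).1 ∨ n i.castSucc (e w).1 = (e v).1 := h
          rw [hp] at h'
          exact absurd (h'.elim id id) (hne _ _)
        · rw [Subsingleton.elim j 0]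
      · obtain ⟨c, hc⟩ := hn.2 _ _ hp
        have last : ∀ j : Fin 1, (blowFull e (n (Fin.last _))).Adj v w → c = Fin.last _ := by
          rintro j ⟨-, h | h⟩
          · exact absurd h hp
          · exact huniq _ _ _ _ hc h
        induction c using Fin.lastCases with
        | last =>
          refine ⟨Sum.inr 0, ⟨hvw', Or.inr hc⟩, ?_⟩
          rintro (i | j) h
          · have := huniq _ _ _ _ hc h
            exact absurd this (Fin.castSucc_lt_last i).ne'
          · rw [Subsingleton.elim j 0]
        | cast c =>
          refine ⟨Sum.inl c, hc, ?_⟩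
          rintro (i | j) h
          · have := huniq _ _ _ _ hc h
            rw [Fin.castSucc_injective _ this]
          · exact absurd (last j h) (Fin.castSucc_lt_last c).ne
  · intro i
    exact blowGraph_factor e _ (hne _) (h3 _)
  · intro j
    exact blowFull_factor e _ (hne _) (h3 _)
end

section
/- Let t ≥ 0. The edge set of the complete multipartite graph K_{(6t+3)(7)} with 6t+3 parts of size 7 can be partitioned into 3t+1 K_{7,7,7}-factors, where each K_{7,7,7}-factor has the parts of K_{(6t+3)(7)} as the partite sets of its tripartite components. -/
open SimpleGraph

/-- The complete multipartite graph `K_{(6t+3)(7)}` with `6t+3` parts of size `7`;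
the vertex `j` of the part `p` is the pair `(p, j)`. -/
def KMulti (t : ℕ) : SimpleGraph (Fin (6 * t + 3) × Fin 7) where
  Adj x y := x.1 ≠ y.1
  symm := ⟨fun _ _ h => h.symm⟩
  loopless := ⟨fun _ h => h rfl⟩

/-! ## Group divisible designs, Kirkman frames -/

/-- A group divisible design on `X` with groups the fibers of `g`
and block sizes satisfying `P`. -/
def GDD (X γ : Type) (g : X → γ) (P : ℕ → Prop) : Prop :=
  ∃ (ι : Type) (mem : ι → X → Prop),
    (∀ i, P (Nat.card {x // mem i x})) ∧
    (∀ i x y, mem i x → mem i y → g x = g y → x = y) ∧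
    (∀ x y, g x ≠ g y → ∃! i, mem i x ∧ mem i y)

/-- A Kirkman frame of type `2^X`; equivalently a KTS on `X × Bool` plus a point. -/
def KF (X : Type) : Prop :=
  ∃ T : X → X × Bool → X × Bool → Prop,
    (∀ y a b, T y a b → T y b a) ∧
    (∀ y a b c, T y a b → T y b c → T y a c) ∧
    (∀ y a b, T y a b → a.1 ≠ y) ∧
    (∀ y a, a.1 ≠ y → Nat.card {b // T y a b} = 3) ∧
    (∀ y a b, T y a b → a ≠ b → a.1 ≠ b.1) ∧
    (∀ a b : X × Bool, a.1 ≠ b.1 → ∃! y, T y a b)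

lemma GDD.mono {X γ : Type} {g : X → γ} {P Q : ℕ → Prop} (h : GDD X γ g P)
    (hPQ : ∀ k, P k → Q k) : GDD X γ g Q := by
  obtain ⟨ι, mem, h1, h2, h3⟩ := h
  exact ⟨ι, mem, fun i => hPQ _ (h1 i), h2, h3⟩

lemma GDD.congr {X Y γ δ : Type} {g : X → γ} {g' : Y → δ} {P : ℕ → Prop} (h : GDD X γ g P)
    (e : Y ≃ X) (hg : ∀ x y, g' x = g' y ↔ g (e x) = g (e y)) : GDD Y δ g' P := by
  obtain ⟨ι, mem, h1, h2, h3⟩ := h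
  refine ⟨ι, fun i y => mem i (e y), fun i => ?_, fun i x y hx hy hxy => ?_, fun x y hxy => ?_⟩
  · have : Nat.card {y // mem i (e y)} = Nat.card {x // mem i x} :=
      Nat.card_congr (e.subtypeEquiv (fun _ => Iff.rfl))
    rw [this]; exact h1 i
  · exact e.injective (h2 i _ _ hx hy ((hg _ _).1 hxy))
  · exact h3 _ _ (fun h => hxy ((hg _ _).2 h))

lemma KF.congr {X Y : Type} (h : KF X) (e : Y ≃ X) : KF Y := by
  obtain ⟨T, h1, h2, h3, h4, h5, h6⟩ := h
  let f : Y × Bool ≃ X × Bool := e.prodCongr (Equiv.refl _)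
  refine ⟨fun y a b => T (e y) (f a) (f b), fun y a b => h1 _ _ _, fun y a b c => h2 _ _ _ _,
    fun y a b h => ?_, fun y a h => ?_, fun y a b h hab => ?_, fun a b hab => ?_⟩
  · intro h'
    exact h3 _ _ _ h (by simp [f, h'])
  · rw [← h4 (e y) (f a) (by simpa [f] using h)]
    exact Nat.card_congr (f.subtypeEquiv (fun _ => Iff.rfl))
  · have := h5 _ _ _ h (fun h => hab (f.injective h))
    intro h'
    exact this (by simp [f, h'])
  · obtain ⟨y, hy, hu⟩ := h6 (f a) (f b) (by simpa [f] using hab)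
    refine ⟨e.symm y, by simpa using hy, fun z hz => ?_⟩
    rw [Equiv.eq_symm_apply]
    exact hu _ hz

/-- PBD closure. -/
lemma KF_of_GDD {X : Type} [Finite X] (h : GDD X X id (fun k => KF (Fin k))) : KF X := by
  obtain ⟨ι, mem, h1, -, h3⟩ := h
  have key : ∀ i, KF {x // mem i x} := fun i => (h1 i).congr (Finite.equivFin _)
  choose T t1 t2 t3 t4 t5 t6 using key
  have uniq : ∀ {x y i j}, x ≠ y → mem i x → mem i y → mem j x → mem j y → i = j := by
    intro x y i j hxy a b c d
    exact (h3 x y hxy).unique ⟨a, b⟩ ⟨c, d⟩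
  refine ⟨fun y a b => ∃ i, ∃ hy : mem i y, ∃ ha : mem i a.1, ∃ hb : mem i b.1,
    T i ⟨y, hy⟩ (⟨a.1, ha⟩, a.2) (⟨b.1, hb⟩, b.2), ?_, ?_, ?_, ?_, ?_, ?_⟩
  · rintro y a b ⟨i, hy, ha, hb, h⟩
    exact ⟨i, hy, hb, ha, t1 _ _ _ _ h⟩
  · rintro y a b c ⟨i, hy, ha, hb, h⟩ ⟨j, hy', hb', hc, h'⟩
    have hne : b.1 ≠ y := fun e => t3 _ _ _ _ h' (Subtype.ext e)
    obtain rfl : i = j := uniq hne hb hy hb' hy'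
    exact ⟨i, hy, ha, hc, t2 _ _ _ _ _ h h'⟩
  · rintro y a b ⟨i, hy, ha, hb, h⟩ e
    exact t3 _ _ _ _ h (Subtype.ext e)
  · intro y a hne
    obtain ⟨i, ⟨ha, hy⟩, -⟩ := h3 a.1 y hne
    rw [← t4 i ⟨y, hy⟩ (⟨a.1, ha⟩, a.2) (fun e => hne (congrArg Subtype.val e))]
    symm
    refine Nat.card_congr (Equiv.ofBijective
      (fun b => ⟨(b.1.1.1, b.1.2), i, hy, ha, b.1.1.2, b.2⟩) ⟨?_, ?_⟩)
    · rintro ⟨⟨⟨b, hb⟩, s⟩, hT⟩ ⟨⟨⟨b', hb'⟩, s'⟩, hT'⟩ he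
      simp only [Subtype.mk.injEq, Prod.mk.injEq] at he
      obtain ⟨rfl, rfl⟩ := he
      rfl
    · rintro ⟨b, j, hy', ha', hb, h⟩
      obtain rfl : i = j := uniq hne ha hy ha' hy'
      exact ⟨⟨(⟨b.1, hb⟩, b.2), h⟩, rfl⟩
  · rintro y a b ⟨i, hy, ha, hb, h⟩ hab e
    refine t5 _ _ _ _ h ?_ (Subtype.ext e)
    intro e'
    apply hab
    rw [Prod.ext_iff] at e' ⊢
    exact ⟨e, e'.2⟩
  · intro a b hab
    obtain ⟨i, ⟨ha, hb⟩, -⟩ := h3 _ _ hab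
    obtain ⟨y, hy, hu⟩ := t6 i (⟨a.1, ha⟩, a.2) (⟨b.1, hb⟩, b.2)
      (fun e => hab (congrArg Subtype.val e))
    refine ⟨y.1, ⟨i, y.2, ha, hb, hy⟩, ?_⟩
    rintro z ⟨j, hz, ha', hb', h⟩
    obtain rfl : i = j := uniq hab ha hb ha' hb'
    exact congrArg Subtype.val (hu ⟨z, hz⟩ h)

/-- Adjoin a point to all the groups. -/
lemma GDD.fill {X γ : Type} [Finite X] {g : X → γ} {P : ℕ → Prop} (h : GDD X γ g P)
    (hg : ∀ c, P (Nat.card {x // g x = c} + 1)) : GDD (Option X) (Option X) id P := by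
  obtain ⟨ι, mem, h1, h2, h3⟩ := h
  refine ⟨ι ⊕ γ, fun i x => match i, x with
    | .inl i, some x => mem i x
    | .inl _, none => False
    | .inr c, some x => g x = c
    | .inr _, none => True, ?_, ?_, ?_⟩
  · rintro (i | c)
    · convert h1 i using 1
      symm
      refine Nat.card_congr (Equiv.ofBijective (fun x => ⟨some x.1, x.2⟩) ⟨?_, ?_⟩)
      · intro a b hab
        simpa [Subtype.ext_iff] using hab
      · rintro ⟨(_ | x), hx⟩
        · exact hx.elim
        · exact ⟨⟨x, hx⟩, rfl⟩
    · convert hg c using 1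
      rw [← Finite.card_option]
      symm
      refine Nat.card_congr (Equiv.ofBijective (fun x => match x with
        | none => ⟨none, trivial⟩
        | some x => ⟨some x.1, x.2⟩) ⟨?_, ?_⟩)
      · rintro (_ | a) (_ | b) hab
        · rfl
        · simp [Subtype.ext_iff] at hab
        · simp [Subtype.ext_iff] at hab
        · simpa [Subtype.ext_iff] using hab
      · rintro ⟨(_ | x), hx⟩
        · exact ⟨none, rfl⟩
        · exact ⟨some ⟨x, hx⟩, rfl⟩
  · intro i x y _ _ h; exact h
  · rintro (_ | x) (_ | y) hxy
    · exact (hxy rfl).elim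
    · refine ⟨.inr (g y), ⟨trivial, rfl⟩, ?_⟩
      rintro (i | c) ⟨h, h'⟩
      · exact h.elim
      · exact congrArg _ (Eq.symm h')
    · refine ⟨.inr (g x), ⟨rfl, trivial⟩, ?_⟩
      rintro (i | c) ⟨h, h'⟩
      · exact h'.elim
      · exact congrArg _ (Eq.symm h)
    · by_cases hgxy : g x = g y
      · refine ⟨.inr (g x), ⟨rfl, hgxy.symm⟩, ?_⟩
        rintro (i | c) ⟨h, h'⟩
        · exact (hxy (congrArg some (h2 i x y h h' hgxy))).elim
        · exact congrArg _ (Eq.symm h)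
      · obtain ⟨i, hi, hu⟩ := h3 x y hgxy
        refine ⟨.inl i, hi, ?_⟩
        rintro (j | c) ⟨h, h'⟩
        · exact congrArg _ (hu j ⟨h, h'⟩)
        · exact (hgxy (Eq.trans h (Eq.symm h'))).elim

/-- Wilson's fundamental construction with weight `3`. -/
lemma GDD.weight {X γ : Type} [Finite X] {g : X → γ} {P Q : ℕ → Prop} (h : GDD X γ g P)
    (ht : ∀ k, P k → GDD (Fin k × Fin 3) (Fin k) Prod.fst Q) :
    GDD (X × Fin 3) γ (fun x => g x.1) Q := by
  obtain ⟨ι, mem, h1, h2, h3⟩ := h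
  have key : ∀ i, GDD ({x // mem i x} × Fin 3) {x // mem i x} Prod.fst Q := fun i =>
    (ht _ (h1 i)).congr ((Finite.equivFin _).prodCongr (Equiv.refl _)) (by
      intro x y; simp)
  choose κ m t1 t2 t3 using key
  refine ⟨Σ i, κ i, fun l x => ∃ hx : mem l.1 x.1, m l.1 l.2 (⟨x.1, hx⟩, x.2), ?_, ?_, ?_⟩
  · rintro ⟨i, l⟩
    convert t1 i l using 1
    symm
    refine Nat.card_congr (Equiv.ofBijective
      (fun b => ⟨(b.1.1.1, b.1.2), b.1.1.2, b.2⟩) ⟨?_, ?_⟩)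
    · rintro ⟨⟨⟨b, hb⟩, s⟩, hT⟩ ⟨⟨⟨b', hb'⟩, s'⟩, hT'⟩ he
      simp only [Subtype.mk.injEq, Prod.mk.injEq] at he
      obtain ⟨rfl, rfl⟩ := he
      rfl
    · rintro ⟨b, hb, h⟩
      exact ⟨⟨(⟨b.1, hb⟩, b.2), h⟩, rfl⟩
  · rintro ⟨i, l⟩ ⟨x, s⟩ ⟨y, s'⟩ ⟨hx, h⟩ ⟨hy, h'⟩ hxy
    obtain rfl : x = y := h2 i x y hx hy hxy
    have := t2 i l _ _ h h' rfl
    simp only [Prod.mk.injEq, true_and] at this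
    rw [this]
  · rintro ⟨x, s⟩ ⟨y, s'⟩ hxy
    obtain ⟨i, ⟨hx, hy⟩, hu⟩ := h3 x y hxy
    obtain ⟨l, ⟨hl, hl'⟩, hul⟩ := t3 i (⟨x, hx⟩, s) (⟨y, hy⟩, s') (fun e => hxy (by
      simp only [Subtype.mk.injEq] at e
      exact congrArg g e))
    refine ⟨⟨i, l⟩, ⟨⟨hx, hl⟩, ⟨hy, hl'⟩⟩, ?_⟩
    rintro ⟨j, l'⟩ ⟨⟨hx', h⟩, ⟨hy', h'⟩⟩
    obtain rfl : j = i := hu j ⟨hx', hy'⟩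
    rw [hul l' ⟨h, h'⟩]

lemma KF_fill {X γ : Type} [Finite X] {g : X → γ} {n : ℕ} (h : GDD X γ g (fun k => KF (Fin k)))
    (hg : ∀ c, KF (Fin (Nat.card {x // g x = c} + 1))) (hn : n = Nat.card X + 1) :
    KF (Fin n) := by
  have := KF_of_GDD (h.fill hg)
  refine this.congr ?_
  subst hn
  exact (Fintype.equivFinOfCardEq (by simp)).symm.trans (Finite.equivFinOfCardEq (Finite.card_option)).symm

/-! ## Small designs, checked by computation -/

/-- Bitmask blocks of size `4` on `{0,…,n-1}`, groups the fibers of `min (x/3) u`. -/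
def chkGDD (n u : ℕ) (bs : List ℕ) : Bool :=
  bs.all (fun b => ((List.range n).countP fun x => b.testBit x) == 4) &&
  (List.range n).all fun x => (List.range n).all fun y =>
    x == y || ((bs.filter fun b => b.testBit x && b.testBit y).length ==
      if min (x / 3) u == min (y / 3) u then 0 else 1)

lemma card_range_countP (n : ℕ) (p : ℕ → Bool) :
    Nat.card {x : Fin n // p x = true} = (List.range n).countP p := by
  have h1 : (List.range n).countP p = ((Finset.range n).filter fun x => p x = true).card := by
    rw [List.countP_eq_length_filter]
    simp [Finset.filter, Finset.range, Finset.card, Multiset.range]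
  rw [h1, Nat.card_eq_fintype_card, Fintype.card_subtype]
  refine Finset.card_bij (fun x _ => x.val) ?_ ?_ ?_
  · intro x hx
    simpa using hx
  · intro x _ y _ h
    exact Fin.ext h
  · intro x hx
    simp only [Finset.mem_filter, Finset.mem_range] at hx
    exact ⟨⟨x, hx.1⟩, by simpa using hx.2, rfl⟩

lemma GDD_of_chk (n u : ℕ) (bs : List ℕ) (h : chkGDD n u bs = true) :
    GDD (Fin n) ℕ (fun x => min (x.val / 3) u) (fun k => k = 4) := by
  simp only [chkGDD, Bool.and_eq_true, List.all_eq_true, Bool.or_eq_true, beq_iff_eq,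
    List.mem_range] at h
  obtain ⟨h1, h2⟩ := h
  refine ⟨{b // b ∈ bs}, fun b x => b.1.testBit x = true, ?_, ?_, ?_⟩
  · rintro ⟨b, hb⟩
    rw [card_range_countP n (fun x => b.testBit x)]
    exact h1 b hb
  · rintro ⟨b, hb⟩ x y hx hy hxy
    rcases h2 x x.2 y y.2 with h | h
    · exact Fin.ext h
    · rw [if_pos hxy, List.length_eq_zero_iff, List.filter_eq_nil_iff] at h
      exact (h b hb (by simp [hx, hy])).elim
  · intro x y hxy
    rcases h2 x x.2 y y.2 with h | h
    · exact (hxy (by dsimp only; rw [h])).elim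
    · rw [if_neg hxy, List.length_eq_one_iff] at h
      obtain ⟨b, hb⟩ := h
      have hm : ∀ c, c ∈ bs ∧ (c.testBit x = true ∧ c.testBit y = true) ↔ c = b := by
        intro c
        rw [← List.mem_singleton (a := c), ← hb, List.mem_filter, Bool.and_eq_true]
      have := (hm b).2 rfl
      refine ⟨⟨b, this.1⟩, this.2, ?_⟩
      rintro ⟨c, hc⟩ hc'
      exact Subtype.ext ((hm c).1 ⟨hc, hc'⟩)

lemma KF_of_col {X : Type} (c : X → X × Bool → ℕ)
    (h0 : ∀ y a, c y a = 0 ↔ a.1 = y)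
    (h3 : ∀ y a, a.1 ≠ y → Nat.card {b // c y a = c y b} = 3)
    (h4 : ∀ y a b, a ≠ b → a.1 = b.1 → a.1 ≠ y → c y a ≠ c y b)
    (h5 : ∀ a b : X × Bool, a.1 ≠ b.1 → ∃! y, a.1 ≠ y ∧ c y a = c y b) : KF X := by
  refine ⟨fun y a b => a.1 ≠ y ∧ c y a = c y b, ?_, ?_, ?_, ?_, ?_, h5⟩
  · rintro y a b ⟨h, h'⟩
    refine ⟨fun e => h ?_, h'.symm⟩
    rw [← h0, h', h0, e]
  · rintro y a b d ⟨h, h'⟩ ⟨k, k'⟩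
    exact ⟨h, h'.trans k'⟩
  · rintro y a b ⟨h, -⟩; exact h
  · intro y a h
    simpa [h] using h3 y a h
  · rintro y a b ⟨h, h'⟩ hab e
    exact h4 y a b hab e h h'

/-- Digit lookup, base `64`. -/
def dig (t i : ℕ) : ℕ := (t >>> (6 * i)) % 64

def chkStart (q t : ℕ) : Bool :=
  ((List.range q).all fun x => (List.range 2).all fun i =>
    (dig t (2 * x + i) == 0) == (x == 0) && (x == 0 ||
      ((List.range q).countP fun y => dig t (2 * x + i) == dig t (2 * y)) +
      ((List.range q).countP fun y => dig t (2 * x + i) == dig t (2 * y + 1)) == 3)) &&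
  ((List.range q).all fun x => x == 0 || !(dig t (2 * x) == dig t (2 * x + 1))) &&
  (List.range q).all fun d => d == 0 || (List.range 2).all fun i => (List.range 2).all fun j =>
    ((List.range q).filter fun x =>
      !(x == 0) && dig t (2 * x + i) == dig t (2 * ((x + d) % q) + j)).length == 1

lemma KF_of_start (q t : ℕ) [NeZero q] (h : chkStart q t = true) : KF (Fin q) := by
  simp only [chkStart, Bool.and_eq_true, List.all_eq_true, Bool.or_eq_true, beq_iff_eq,
    List.mem_range, Bool.not_eq_true', beq_eq_false_iff_ne] at h
  obtain ⟨⟨h1, h2⟩, h3⟩ := h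
  have hq : 0 < q := Nat.pos_of_ne_zero (NeZero.ne q)
  have htn : ∀ s : Bool, s.toNat < 2 := by decide
  have hlt : ∀ z : ZMod q, z.val < q := ZMod.val_lt
  have key : KF (ZMod q) := by
    refine KF_of_col (fun y a => dig t (2 * (a.1 - y).val + a.2.toNat)) ?_ ?_ ?_ ?_
    · intro y a
      have := (h1 _ (hlt (a.1 - y)) _ (htn a.2)).1
      rw [Bool.eq_iff_iff, beq_iff_eq, beq_iff_eq, ZMod.val_eq_zero, sub_eq_zero] at this
      exact this
    · intro y a hne
      have := (h1 _ (hlt (a.1 - y)) _ (htn a.2)).2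
      rw [ZMod.val_eq_zero, sub_eq_zero] at this
      rw [← this.resolve_left hne]
      set C := dig t (2 * (a.1 - y).val + a.2.toNat)
      rw [← card_range_countP, ← card_range_countP, ← Nat.card_sum]
      symm
      refine Nat.card_congr (Equiv.ofBijective (fun b => match b with
        | .inl b => ⟨((b.1.val : ZMod q) + y, false), by
            have := b.2
            simpa [ZMod.val_cast_of_lt b.1.2] using this⟩
        | .inr b => ⟨((b.1.val : ZMod q) + y, true), by
            have := b.2
            simpa [ZMod.val_cast_of_lt b.1.2] using this⟩) ⟨?_, ?_⟩)
      · have hinj : ∀ x x' : Fin q, ((x.val : ℕ) : ZMod q) = ((x'.val : ℕ) : ZMod q) → x = x' := by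
          intro x x' hx
          have := congrArg ZMod.val hx
          rw [ZMod.val_cast_of_lt x.2, ZMod.val_cast_of_lt x'.2] at this
          exact Fin.ext this
        rintro (⟨b, hb⟩ | ⟨b, hb⟩) (⟨b', hb'⟩ | ⟨b', hb'⟩) he
        · simp only [Subtype.mk.injEq, Prod.mk.injEq, add_left_inj, and_true] at he
          obtain rfl := hinj _ _ he
          rfl
        · simp at he
        · simp at he
        · simp only [Subtype.mk.injEq, Prod.mk.injEq, add_left_inj, and_true] at he
          obtain rfl := hinj _ _ he
          rfl
      · rintro ⟨⟨b, s⟩, hb⟩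
        cases s
        · exact ⟨.inl ⟨⟨(b - y).val, hlt _⟩, by simpa using hb⟩, by simp⟩
        · exact ⟨.inr ⟨⟨(b - y).val, hlt _⟩, by simpa using hb⟩, by simp⟩
    · rintro y ⟨a, s⟩ ⟨b, s'⟩ hab he hne
      dsimp only at he hne
      subst he
      have := h2 _ (hlt (a - y))
      rw [ZMod.val_eq_zero, sub_eq_zero] at this
      replace this := this.resolve_left hne
      cases s <;> cases s' <;> simp at hab ⊢
      · exact this
      · exact this.symm
    · rintro ⟨a, s⟩ ⟨b, s'⟩ hab
      dsimp only at hab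
      have := h3 _ (hlt (b - a))
      rw [ZMod.val_eq_zero, sub_eq_zero] at this
      replace this := this.resolve_left (Ne.symm hab) _ (htn s) _ (htn s')
      rw [List.length_eq_one_iff] at this
      obtain ⟨x, hx⟩ := this
      have hm : ∀ z : ZMod q, (z ≠ 0 ∧ dig t (2 * z.val + s.toNat) =
          dig t (2 * (z + (b - a)).val + s'.toNat)) ↔ z.val = x := by
        intro z
        rw [← List.mem_singleton (a := z.val), ← hx, List.mem_filter, ZMod.val_add]
        simp [hlt z]
      have hxq : x < q := by
        have : x ∈ [x] := by simp
        rw [← hx, List.mem_filter] at this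
        simpa using this.1
      refine ⟨a - (x : ZMod q), ?_, ?_⟩
      · have := (hm (x : ZMod q)).2 (ZMod.val_cast_of_lt hxq)
        dsimp only
        have e1 : a - (a - (x : ZMod q)) = x := by ring
        have e2 : b - (a - (x : ZMod q)) = x + (b - a) := by ring
        rw [e1, e2]
        refine ⟨fun e => this.1 ?_, this.2⟩
        rw [← e1, ← e, sub_self]
      · rintro y ⟨hy, hy'⟩
        dsimp only at hy hy'
        have := (hm (a - y)).1 ⟨sub_ne_zero.2 hy, by
          have e2 : a - y + (b - a) = b - y := by ring
          rw [e2]; exact hy'⟩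
        rw [← this]; simp
  exact key.congr (Fintype.equivOfCardEq (by simp [ZMod.card]))

lemma KF_one : KF (Fin 1) := by
  refine ⟨fun _ _ _ => False, ?_, ?_, ?_, ?_, ?_, ?_⟩
  · simp
  · simp
  · simp
  · intro y a h; exact (h (Subsingleton.elim _ _)).elim
  · simp
  · intro a b h; exact (h (Subsingleton.elim _ _)).elim

lemma KF_of_frame (r t : ℕ)
    (h0 : ∀ y a : Fin r, ∀ s : Bool, dig t (2 * r * y + (2 * a + s.toNat)) = 0 ↔ a = y)
    (h3 : ∀ y a : Fin r, ∀ s : Bool, a ≠ y →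
      (Finset.univ.filter fun b : Fin r × Bool => dig t (2 * r * y + (2 * a + s.toNat)) =
        dig t (2 * r * y + (2 * b.1 + b.2.toNat))).card = 3)
    (h4 : ∀ y a : Fin r, a ≠ y → dig t (2 * r * y + (2 * a + false.toNat)) ≠
      dig t (2 * r * y + (2 * a + true.toNat)))
    (h5 : ∀ a b : Fin r, ∀ s s' : Bool, a ≠ b → ∃ y : Fin r, ∀ z : Fin r,
      (a ≠ z ∧ dig t (2 * r * z + (2 * a + s.toNat)) =
        dig t (2 * r * z + (2 * b + s'.toNat))) ↔ z = y) :
    KF (Fin r) := by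
  refine KF_of_col (fun y a => dig t (2 * r * y + (2 * a.1 + a.2.toNat))) ?_ ?_ ?_ ?_
  · rintro y ⟨a, s⟩; exact h0 y a s
  · rintro y ⟨a, s⟩ h
    rw [Nat.card_eq_fintype_card, Fintype.card_subtype]
    exact h3 y a s h
  · rintro y ⟨a, s⟩ ⟨b, s'⟩ hab he hne
    dsimp only at he hne
    subst he
    cases s <;> cases s' <;> simp only [ne_eq, not_true_eq_false] at hab ⊢
    · exact h4 _ _ hne
    · exact (h4 _ _ hne).symm
  · rintro ⟨a, s⟩ ⟨b, s'⟩ hab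
    obtain ⟨y, hy⟩ := h5 a b s s' hab
    exact ⟨y, (hy y).2 rfl, fun z hz => (hy z).1 hz⟩

def gdd12 : List ℕ :=
  [585, 2193, 1313, 1162, 786, 2146, 2316, 1108, 676]

def gdd15 : List ℕ :=
  [5384, 10320, 17056, 6273, 8962, 17476, 4628, 9249, 18442, 4194, 8332, 16657, 585, 1170,
   2340]

def gdd24 : List ℕ :=
  [331777, 8427520, 565256, 4464642, 264288, 526468, 2686992, 9437202, 2236448, 1048868,
   4276228, 8454720, 8397952, 3150336, 5276672, 4325448, 2113665, 656385, 135440, 49410,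
   279048, 33313, 5132, 8388873, 2099210, 4196369, 528450, 295056, 8724, 66594, 8781828,
   76032, 8929312, 1056833, 4198560, 2129988, 1114248, 131714, 2360576, 1198080, 4719360,
   17488]

def gdd27 : List ℕ :=
  [8713, 17426, 6180, 69704, 139408, 49440, 33857, 67714, 131844, 4461056, 8922112, 3164160,
   35688448, 71376896, 25313280, 17334784, 34669568, 67504128, 2359313, 4718626, 9437196,
   18874504, 37749008, 75497568, 17039426, 34078852, 68157697, 16842785, 33685514, 67141652,
   263432, 526416, 1049248, 2105412, 4210817, 8392962, 33571392, 67114112, 16787712, 659457,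
   1089538, 344068, 4229128, 8454672, 2229280, 8683648, 2687232, 5374016, 69206530,
   20972548, 41945089, 17829904, 33824800, 67649544]

def gdd21 : List ℕ :=
  [32841, 50208, 38914, 41728, 32916, 67617, 82192, 66060, 73858, 70720, 147969, 132114,
   139360, 135304, 133380, 270353, 263432, 280704, 266276, 262722, 525441, 524578, 528912,
   540740, 534536, 1052929, 1064970, 1057796, 1050704, 1049248]

def gdd33 : List ℕ :=
  [4233, 8466, 16484, 33864, 67728, 131872, 270912, 541824, 1054976, 2167296, 4334592,
   8439808, 17338368, 34676736, 67518464, 4489217, 8978434, 3276804, 35913736, 71827472,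
   26214432, 18874434, 37748868, 75497729, 16777745, 33555490, 67110924, 134225953,
   134283528, 134744128, 138428928, 167907328, 135299074, 142868496, 203423872, 150995972,
   268451850, 268566608, 269484672, 276829184, 335585280, 268763140, 271056928, 289407232,
   301991937, 536875028, 536903840, 537134336, 538978304, 553730048, 537526273, 542113800,
   578814016, 603980290, 1073807425, 1074791440, 1075855616, 1107329536, 1074274308,
   1082261512, 1090781312, 1077938178, 1140854816, 2147516676, 2148008456, 2155880576,
   2164393984, 2147749890, 2151743520, 2215641152, 2149581825, 2181054480, 4295098498,
   4295231520, 4299165760, 4362142720, 4296032257, 4297097232, 4329046272, 4303356420,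
   4311752712]

def start7 : ℕ :=
  1218521657650013232697344

def start19 : ℕ :=
  67615635512738423519533612476180649266039282539624789164309252411392

def start31 : ℕ :=
  2710403961525627977997621122979100361855232044989154505944582037059643649711961513420787021815654622615948496896

def start43 : ℕ :=
  77202381533982151314822129761731506164289208613943915179306068974397309436498338186448959873320279941147241752360058543080509624041132549683454979181383680

def start79 : ℕ :=
  819375575804998760866037202299733841001653703613926576508285900919642418853362545992565708783666105943879345206774205851381095541695808544718451748464476893528879858999355265686960079115674620730030347789878612973695175740212360736450864598417282884949346067736251747929187424840192000

def frame4 : ℕ :=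
  24699563235752394512299061759767718176429931036676096

def frame10 : ℕ :=
  199119273405960467052196983288787978620922905342360469490205899919093402317805071120866612655450134884792893449501442330710033686076153180888315607578040358904812763383115721279654451702121001046963238311380413472208458237384916397161504721186416132589298648680464689110068119538466703040790509291636076532523767281069122850655093773516653001866921929871360

set_option maxRecDepth 100000
lemma KF4 : KF (Fin 4) := KF_of_frame 4 frame4 (by decide +kernel) (by decide +kernel)
  (by decide +kernel) (by decide +kernel)
lemma KF10 : KF (Fin 10) := KF_of_frame 10 frame10 (by decide +kernel) (by decide +kernel)
  (by decide +kernel) (by decide +kernel)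
lemma KF7 : KF (Fin 7) := KF_of_start 7 start7 (by decide +kernel)
lemma KF19 : KF (Fin 19) := KF_of_start 19 start19 (by decide +kernel)
lemma KF31 : KF (Fin 31) := KF_of_start 31 start31 (by decide +kernel)
lemma KF43 : KF (Fin 43) := KF_of_start 43 start43 (by decide +kernel)
lemma KF79 : KF (Fin 79) := KF_of_start 79 start79 (by decide +kernel)

lemma G12 : GDD (Fin 12) ℕ (fun x => min (x.val / 3) 4) (fun k => k = 4) :=
  GDD_of_chk 12 4 gdd12 (by decide +kernel)
lemma G15 : GDD (Fin 15) ℕ (fun x => min (x.val / 3) 5) (fun k => k = 4) :=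
  GDD_of_chk 15 5 gdd15 (by decide +kernel)
lemma G24 : GDD (Fin 24) ℕ (fun x => min (x.val / 3) 8) (fun k => k = 4) :=
  GDD_of_chk 24 8 gdd24 (by decide +kernel)
lemma G27 : GDD (Fin 27) ℕ (fun x => min (x.val / 3) 9) (fun k => k = 4) :=
  GDD_of_chk 27 9 gdd27 (by decide +kernel)
lemma G21 : GDD (Fin 21) ℕ (fun x => min (x.val / 3) 5) (fun k => k = 4) :=
  GDD_of_chk 21 5 gdd21 (by decide +kernel)
lemma G33 : GDD (Fin 33) ℕ (fun x => min (x.val / 3) 9) (fun k => k = 4) :=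
  GDD_of_chk 33 9 gdd33 (by decide +kernel)

/-! ## The recursion -/

lemma T4 : GDD (Fin 4 × Fin 3) (Fin 4) Prod.fst (fun k => k = 4) :=
  G12.congr finProdFinEquiv (by decide +kernel)

lemma T5 : GDD (Fin 5 × Fin 3) (Fin 5) Prod.fst (fun k => k = 4) :=
  G15.congr finProdFinEquiv (by decide +kernel)

lemma GDD.weight4 {X γ : Type} [Finite X] {g : X → γ} {P : ℕ → Prop} (h : GDD X γ g P)
    (hP : ∀ k, P k → k = 4 ∨ k = 5) :
    GDD (X × Fin 3) γ (fun x => g x.1) (fun k => k = 4) := by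
  refine h.weight ?_
  intro k hk
  rcases hP k hk with rfl | rfl
  · exact T4
  · exact T5

lemma card_fiber_prod {X γ : Type} (g : X → γ) (c : γ) :
    Nat.card {x : X × Fin 3 // g x.1 = c} = 3 * Nat.card {x // g x = c} := by
  have : Nat.card {x : X × Fin 3 // g x.1 = c} = Nat.card ({x // g x = c} × Fin 3) :=
    Nat.card_congr ⟨fun x => (⟨x.1.1, x.2⟩, x.1.2), fun x => ⟨(x.1.1, x.2), x.1.2⟩,
      fun _ => rfl, fun _ => rfl⟩
  rw [this, Nat.card_prod, Nat.card_eq_fintype_card (α := Fin 3), Fintype.card_fin, mul_comm]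

lemma KF_four {k : ℕ} (h : k = 4) : KF (Fin k) := h ▸ KF4

lemma fiber_card (n u : ℕ) (Q : ℕ → Prop) (h0 : Q 0)
    (h : ∀ c < u + 1, Q ((Finset.univ.filter fun x : Fin n => min (x.val / 3) u = c).card)) (c : ℕ) :
    Q (Nat.card {x : Fin n // min (x.val / 3) u = c}) := by
  rw [Nat.card_eq_fintype_card, Fintype.card_subtype]
  by_cases hc : c < u + 1
  · exact h c hc
  · convert h0
    rw [Finset.card_eq_zero, Finset.filter_eq_empty_iff]
    intro x _
    omega

/-- Fill a small design with groups of size 3, 6. -/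
lemma KF_small (n u : ℕ) (h : GDD (Fin n) ℕ (fun x => min (x.val / 3) u) (fun k => k = 4))
    (hc : ∀ c < u + 1, (Finset.univ.filter fun x : Fin n => min (x.val / 3) u = c).card ∈
      [0, 3, 6]) : KF (Fin (n + 1)) := by
  refine KF_fill (h.mono fun k => KF_four) ?_ (by simp)
  refine fiber_card n u (fun k => KF (Fin (k + 1))) KF_one ?_
  intro c hcu
  have := hc c hcu
  simp only [List.mem_cons, List.not_mem_nil, or_false] at this
  rcases this with h | h | h <;> rw [h]
  · exact KF_one
  · exact KF4
  · exact KF7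

lemma KF13 : KF (Fin 13) := KF_small 12 4 G12 (by decide +kernel)
lemma KF16 : KF (Fin 16) := KF_small 15 5 G15 (by decide +kernel)
lemma KF25 : KF (Fin 25) := KF_small 24 8 G24 (by decide +kernel)
lemma KF28 : KF (Fin 28) := KF_small 27 9 G27 (by decide +kernel)
lemma KF22 : KF (Fin 22) := KF_small 21 5 G21 (by decide +kernel)
lemma KF34 : KF (Fin 34) := KF_small 33 9 G33 (by decide +kernel)

/-- Weight 3, then fill groups of size 9. -/
lemma KF_small9 (n u : ℕ) (h : GDD (Fin n) ℕ (fun x => min (x.val / 3) u) (fun k => k = 4))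
    (hc : ∀ c < u + 1, (Finset.univ.filter fun x : Fin n => min (x.val / 3) u = c).card ∈
      [0, 3]) : KF (Fin (n * 3 + 1)) := by
  refine KF_fill ((h.weight4 (fun k hk => Or.inl hk)).mono fun k => KF_four) ?_ (by simp)
  intro c
  rw [card_fiber_prod (fun x : Fin n => min (x.val / 3) u)]
  refine fiber_card n u (fun k => KF (Fin (3 * k + 1))) KF_one ?_ c
  intro c hcu
  have := hc c hcu
  simp only [List.mem_cons, List.not_mem_nil, or_false] at this
  rcases this with h | h <;> rw [h]
  · exact KF_one
  · exact KF10

lemma KF37 : KF (Fin 37) := KF_small9 12 4 G12 (by decide +kernel)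
lemma KF46 : KF (Fin 46) := KF_small9 15 5 G15 (by decide +kernel)
lemma KF82 : KF (Fin 82) := KF_small9 27 9 G27 (by decide +kernel)

lemma KF40 : KF (Fin 40) := by
  have h : GDD (Option (Fin 4 × Fin 3)) (Option (Fin 4 × Fin 3)) id (fun k => k = 4) := by
    refine T4.fill ?_
    intro c
    rw [Nat.card_eq_fintype_card]
    revert c
    decide +kernel
  refine KF_fill ((h.weight4 (fun k hk => Or.inl hk)).mono fun k => KF_four) ?_ (by simp)
  intro c
  rw [card_fiber_prod id]
  have : Nat.card {x : Option (Fin 4 × Fin 3) // id x = c} = 1 := by simp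
  rw [this]
  exact KF4

/-- The truncated transversal design. -/
lemma GDD_TD {A : Type} [CommRing A] [Finite A] (M : Set A) (c : Fin 4 → A)
    (hc : ∀ i j, i ≠ j → IsUnit (c i - c j)) :
    GDD ((Fin 4 × A) ⊕ M) (Option (Fin 4)) (Sum.elim (fun x => some x.1) (fun _ => none))
      (fun k => k = 4 ∨ k = 5) := by
  classical
  refine ⟨A × A, fun l => Sum.elim (fun x => x.2 = l.1 + c x.1 * l.2) (fun m => m.1 = l.2),
    ?_, ?_, ?_⟩
  · rintro ⟨u, v⟩
    by_cases hv : v ∈ M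
    · right
      have : Nat.card (Option (Fin 4)) = 5 := by simp
      rw [← this]
      symm
      refine Nat.card_congr (Equiv.ofBijective (fun i => match i with
        | some i => ⟨.inl (i, u + c i * v), rfl⟩
        | none => ⟨.inr ⟨v, hv⟩, rfl⟩) ⟨?_, ?_⟩)
      · rintro (_ | i) (_ | j) h
        · rfl
        · simp [Subtype.ext_iff] at h
        · simp [Subtype.ext_iff] at h
        · have h := congrArg Subtype.val h
          simp only [Sum.inl.injEq, Prod.mk.injEq] at h
          rw [h.1]
      · rintro ⟨(⟨i, a⟩ | ⟨m, hm⟩), h⟩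
        · refine ⟨some i, ?_⟩
          simp only [Sum.elim_inl] at h
          simp [h]
        · refine ⟨none, ?_⟩
          simp only [Sum.elim_inr] at h
          simp [h]
    · left
      have : Nat.card (Fin 4) = 4 := by simp
      refine Eq.trans ?_ this
      symm
      refine Nat.card_congr (Equiv.ofBijective (fun i => ⟨.inl (i, u + c i * v), rfl⟩) ⟨?_, ?_⟩)
      · rintro i j h
        have h := congrArg Subtype.val h
        simp only [Sum.inl.injEq, Prod.mk.injEq] at h
        exact h.1
      · rintro ⟨(⟨i, a⟩ | ⟨m, hm⟩), h⟩
        · refine ⟨i, ?_⟩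
          simp only [Sum.elim_inl] at h
          simp [h]
        · simp only [Sum.elim_inr] at h
          exact (hv (h ▸ hm)).elim
  · rintro ⟨u, v⟩ (⟨i, a⟩ | ⟨m, hm⟩) (⟨j, b⟩ | ⟨m', hm'⟩) h h' hg
    · simp only [Sum.elim_inl, Option.some.injEq] at h h' hg
      subst hg
      rw [h, h']
    · simp at hg
    · simp at hg
    · simp only [Sum.elim_inr] at h h'
      simp [h, h']
  · rintro (⟨i, a⟩ | ⟨m, hm⟩) (⟨j, b⟩ | ⟨m', hm'⟩) hg
    · have hij : i ≠ j := fun h => hg (by simp [h])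
      obtain ⟨w, hw⟩ := (hc i j hij).exists_right_inv
      simp only [Sum.elim_inl]
      refine ⟨(a - c i * (w * (a - b)), w * (a - b)), ⟨by ring, ?_⟩, ?_⟩
      · linear_combination (a - b) * hw
      · rintro ⟨u, v⟩ ⟨h, h'⟩
        dsimp only at h h'
        have hv : v = w * (a - b) := by
          linear_combination -v * hw - w * h + w * h'
        rw [Prod.mk.injEq]
        refine ⟨?_, hv⟩
        rw [← hv, h]; ring
    · simp only [Sum.elim_inl, Sum.elim_inr]
      refine ⟨(a - c i * m', m'), ⟨by ring, rfl⟩, ?_⟩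
      rintro ⟨u, v⟩ ⟨h, h'⟩
      dsimp only at h h'
      rw [Prod.mk.injEq]
      exact ⟨by rw [h, h']; ring, h'.symm⟩
    · simp only [Sum.elim_inl, Sum.elim_inr]
      refine ⟨(b - c j * m, m), ⟨rfl, by ring⟩, ?_⟩
      rintro ⟨u, v⟩ ⟨h', h⟩
      dsimp only at h h'
      rw [Prod.mk.injEq]
      exact ⟨by rw [h, h']; ring, h'.symm⟩
    · exact (hg rfl).elim

/-- There is a ring of size `n` with four elements whose differences are units. -/
def GoodRing (n : ℕ) : Prop :=
  ∃ (A : Type) (_ : CommRing A) (c : Fin 4 → A), Nat.card A = n ∧ Finite A ∧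
    ∀ i j, i ≠ j → IsUnit (c i - c j)

lemma KF_step {n m t : ℕ} (hn : GoodRing n) (hmn : m ≤ n) (ht : t = 4 * n + m)
    (h1 : KF (Fin (3 * n + 1))) (h2 : KF (Fin (3 * m + 1))) : KF (Fin (3 * t + 1)) := by
  obtain ⟨A, _, c, hA, _, hc⟩ := hn
  obtain ⟨M, -, hM⟩ : ∃ M : Set A, M ⊆ Set.univ ∧ M.ncard = m :=
    Set.exists_subset_card_eq (by rw [Set.ncard_univ, hA]; exact hmn)
  have hMc : Nat.card M = m := hM
  refine KF_fill (((GDD_TD M c hc).weight4 (fun k hk => hk)).mono fun k => KF_four) ?_ ?_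
  · intro d
    rw [card_fiber_prod (Sum.elim (fun x : Fin 4 × A => some x.1) (fun _ : M => none))]
    rcases d with _ | i
    · convert h2
      rw [← hMc]
      symm
      refine Nat.card_congr (Equiv.ofBijective (fun m => ⟨.inr m, rfl⟩) ⟨?_, ?_⟩)
      · intro a b h
        have h := congrArg Subtype.val h
        simpa using h
      · rintro ⟨(x | m), h⟩
        · simp at h
        · exact ⟨m, rfl⟩
    · convert h1
      rw [← hA]
      symm
      refine Nat.card_congr (Equiv.ofBijective (fun a => ⟨.inl (i, a), rfl⟩) ⟨?_, ?_⟩)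
      · intro a b h
        have h := congrArg Subtype.val h
        simpa using h
      · rintro ⟨(⟨j, x⟩ | m), h⟩
        · simp only [Sum.elim_inl, Option.some.injEq] at h
          subst h
          exact ⟨x, rfl⟩
        · simp at h
  · rw [Nat.card_prod, Nat.card_sum, Nat.card_prod, hA, hMc, ht]
    simp
    ring

lemma goodRing_coprime (n : ℕ) (h2 : ¬ 2 ∣ n) (h3 : ¬ 3 ∣ n) : GoodRing n := by
  have hn : n ≠ 0 := by rintro rfl; simp at h2
  have : NeZero n := ⟨hn⟩
  have c2 : Nat.Coprime 2 n := (Nat.Prime.coprime_iff_not_dvd Nat.prime_two).2 h2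
  have c3 : Nat.Coprime 3 n := (Nat.Prime.coprime_iff_not_dvd Nat.prime_three).2 h3
  have key : ∀ i j : Fin 4, j < i → IsUnit (((i.val : ℕ) : ZMod n) - ((j.val : ℕ) : ZMod n)) := by
    intro i j hij
    rw [← Nat.cast_sub hij.le, ZMod.isUnit_iff_coprime]
    have h' : i.val - j.val = 1 ∨ i.val - j.val = 2 ∨ i.val - j.val = 3 := by omega
    rcases h' with h | h | h <;> rw [h]
    · exact Nat.coprime_one_left n
    · exact c2
    · exact c3
  refine ⟨ZMod n, inferInstance, fun i => ((i.val : ℕ) : ZMod n), by simp, inferInstance, ?_⟩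
  intro i j hij
  rcases lt_or_gt_of_ne hij with h | h
  · rw [← neg_sub]
    exact (key j i h).neg
  · exact key i j h

lemma goodRing_pp (p k : ℕ) [Fact p.Prime] (hk : k ≠ 0) (h : 4 ≤ p ^ k) : GoodRing (p ^ k) := by
  have hc : Nat.card (GaloisField p k) = p ^ k := GaloisField.card p k hk
  have : Finite (GaloisField p k) := Nat.finite_of_card_ne_zero (by omega)
  let e := Finite.equivFinOfCardEq hc
  refine ⟨GaloisField p k, inferInstance, fun i => e.symm (Fin.castLE h i), hc, inferInstance, ?_⟩
  intro i j hij
  rw [isUnit_iff_ne_zero, sub_ne_zero]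
  intro h'
  apply hij
  have := e.symm.injective h'
  simpa using this

lemma KF_all (t : ℕ) : KF (Fin (3 * t + 1)) := by
  induction t using Nat.strong_induction_on with
  | _ t ih =>
    have step : ∀ n, 1 ≤ n → GoodRing n → 4 * n ≤ t → t ≤ 5 * n → KF (Fin (3 * t + 1)) := by
      intro n h1 hn h4 h5
      exact KF_step hn (m := t - 4 * n) (by omega) (by omega) (ih n (by omega))
        (ih _ (by omega))
    have g4 : GoodRing 4 := goodRing_pp 2 2 (by norm_num) (by norm_num)
    have g8 : GoodRing 8 := goodRing_pp 2 3 (by norm_num) (by norm_num)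
    have g16 : GoodRing 16 := goodRing_pp 2 4 (by norm_num) (by norm_num)
    have g9 : GoodRing 9 := goodRing_pp 3 2 (by norm_num) (by norm_num)
    by_cases ht : t < 80
    · have g5 := goodRing_coprime 5 (by norm_num) (by norm_num)
      have g7 := goodRing_coprime 7 (by norm_num) (by norm_num)
      have g11 := goodRing_coprime 11 (by norm_num) (by norm_num)
      have g13 := goodRing_coprime 13 (by norm_num) (by norm_num)
      by_cases a4 : 16 ≤ t ∧ t ≤ 20
      · exact step 4 (by norm_num) g4 (by omega) (by omega)
      by_cases a5 : 20 ≤ t ∧ t ≤ 25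
      · exact step 5 (by norm_num) g5 (by omega) (by omega)
      by_cases a7 : 28 ≤ t ∧ t ≤ 35
      · exact step 7 (by norm_num) g7 (by omega) (by omega)
      by_cases a8 : 32 ≤ t ∧ t ≤ 40
      · exact step 8 (by norm_num) g8 (by omega) (by omega)
      by_cases a9 : 36 ≤ t ∧ t ≤ 45
      · exact step 9 (by norm_num) g9 (by omega) (by omega)
      by_cases a11 : 44 ≤ t ∧ t ≤ 55
      · exact step 11 (by norm_num) g11 (by omega) (by omega)
      by_cases a13 : 52 ≤ t ∧ t ≤ 65
      · exact step 13 (by norm_num) g13 (by omega) (by omega)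
      by_cases a16 : 64 ≤ t
      · exact step 16 (by norm_num) g16 (by omega) (by omega)
      by_cases a26 : t = 26
      · subst a26; exact KF79
      by_cases a27 : t = 27
      · subst a27; exact KF82
      have : t < 16 := by omega
      clear step ih
      interval_cases t
      · exact KF_one
      · exact KF4
      · exact KF7
      · exact KF10
      · exact KF13
      · exact KF16
      · exact KF19
      · exact KF22
      · exact KF25
      · exact KF28
      · exact KF31
      · exact KF34
      · exact KF37
      · exact KF40
      · exact KF43
      · exact KF46
    · obtain ⟨n, h1, h2, h3, h4⟩ : ∃ n, ¬ 2 ∣ n ∧ ¬ 3 ∣ n ∧ 4 * n ≤ t ∧ t ≤ 5 * n := by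
        have hr : t / 4 % 6 < 6 := Nat.mod_lt _ (by norm_num)
        by_cases r1 : t / 4 % 6 = 0
        · exact ⟨t / 4 - 1, by omega, by omega, by omega, by omega⟩
        by_cases r5 : t / 4 % 6 = 5
        · exact ⟨t / 4, by omega, by omega, by omega, by omega⟩
        · exact ⟨t / 4 / 6 * 6 + 1, by omega, by omega, by omega, by omega⟩
      exact step n (by omega) (goodRing_coprime n h1 h2) h3 h4

/-! ## From Kirkman triple systems to the factorization -/

lemma KTS_exists (t : ℕ) : ∃ rel : Fin (3 * t + 1) → Fin (6 * t + 3) → Fin (6 * t + 3) → Prop,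
    (∀ c, Equivalence (rel c)) ∧ (∀ c p, Nat.card {q // rel c p q} = 3) ∧
    (∀ p q, p ≠ q → ∃! c, rel c p q) := by
  obtain ⟨T, h1, h2, h3, h4, h5, h6⟩ := KF_all t
  let X := Fin (3 * t + 1)
  let R : X → Option (X × Bool) → Option (X × Bool) → Prop := fun y p q =>
    match p, q with
    | none, none => True
    | none, some b => b.1 = y
    | some a, none => a.1 = y
    | some a, some b => (a.1 = y ∧ b.1 = y) ∨ T y a b
  have refl' : ∀ y a, a.1 ≠ y → T y a a := by
    intro y a ha
    have hpos : 0 < Nat.card {b // T y a b} := by rw [h4 y a ha]; norm_num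
    obtain ⟨⟨b, hb⟩⟩ := (Nat.card_pos_iff.1 hpos).1
    exact h2 _ _ _ _ hb (h1 _ _ _ hb)
  have h3' : ∀ y a b, T y a b → b.1 ≠ y := fun y a b h => h3 _ _ _ (h1 _ _ _ h)
  have Req : ∀ y, Equivalence (R y) := by
    intro y
    refine ⟨?_, ?_, ?_⟩
    · rintro (_ | a)
      · trivial
      · by_cases ha : a.1 = y
        · exact Or.inl ⟨ha, ha⟩
        · exact Or.inr (refl' _ _ ha)
    · rintro (_ | a) (_ | b) h
      · exact h
      · exact h
      · exact h
      · rcases h with h | h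
        · exact Or.inl ⟨h.2, h.1⟩
        · exact Or.inr (h1 _ _ _ h)
    · rintro (_ | a) (_ | b) (_ | c) h k
      · trivial
      · exact k
      · trivial
      · rcases k with k | k
        · exact k.2
        · exact (h3 _ _ _ k h).elim
      · exact h
      · exact Or.inl ⟨h, k⟩
      · rcases h with h | h
        · exact h.1
        · exact (h3' _ _ _ h k).elim
      · rcases h with h | h <;> rcases k with k | k
        · exact Or.inl ⟨h.1, k.2⟩
        · exact (h3 _ _ _ k h.2).elim
        · exact (h3' _ _ _ h k.1).elim
        · exact Or.inr (h2 _ _ _ _ h k)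
  have R0 : ∀ y, Nat.card {q // R y none q} = 3 := by
    intro y
    have : Nat.card (Option Bool) = 3 := by simp
    rw [← this]
    symm
    refine Nat.card_congr (Equiv.ofBijective (fun s => match s with
      | none => ⟨none, trivial⟩
      | some s => ⟨some (y, s), rfl⟩) ⟨?_, ?_⟩)
    · rintro (_ | a) (_ | b) h
      · rfl
      · simp [Subtype.ext_iff] at h
      · simp [Subtype.ext_iff] at h
      · have h := congrArg Subtype.val h
        simpa using h
    · rintro ⟨(_ | ⟨a, s⟩), h⟩
      · exact ⟨none, rfl⟩
      · refine ⟨some s, ?_⟩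
        have h' : a = y := h
        subst h'
        rfl
  have Rc : ∀ y p, Nat.card {q // R y p q} = 3 := by
    intro y p
    by_cases hp : R y none p
    · rw [← R0 y]
      refine Nat.card_congr (Equiv.subtypeEquivRight (fun q => ?_))
      exact ⟨fun h => (Req y).trans hp h, fun h => (Req y).trans ((Req y).symm hp) h⟩
    · rcases p with _ | a
      · exact (hp trivial).elim
      · have ha : a.1 ≠ y := hp
        rw [← h4 y a ha]
        symm
        refine Nat.card_congr (Equiv.ofBijective (fun b => ⟨some b.1, Or.inr b.2⟩) ⟨?_, ?_⟩)
        · intro b b' h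
          have h := congrArg Subtype.val h
          simpa [Subtype.ext_iff] using h
        · rintro ⟨(_ | b), h⟩
          · exact (ha h).elim
          · rcases h with h | h
            · exact (ha h.1).elim
            · exact ⟨⟨b, h⟩, rfl⟩
  have Ru : ∀ p q, p ≠ q → ∃! y, R y p q := by
    rintro (_ | a) (_ | b) hpq
    · exact (hpq rfl).elim
    · exact ⟨b.1, rfl, fun y h => Eq.symm h⟩
    · exact ⟨a.1, rfl, fun y h => Eq.symm h⟩
    · have hab : a ≠ b := fun h => hpq (by rw [h])
      by_cases h : a.1 = b.1
      · refine ⟨a.1, Or.inl ⟨rfl, h.symm⟩, ?_⟩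
        rintro y (k | k)
        · exact k.1.symm
        · exact (h5 _ _ _ k hab h).elim
      · obtain ⟨y, hy, hu⟩ := h6 a b h
        refine ⟨y, Or.inr hy, ?_⟩
        rintro z (k | k)
        · exact (h (k.1.trans k.2.symm)).elim
        · exact hu z k
  let e : Fin (6 * t + 3) ≃ Option (X × Bool) :=
    Fintype.equivOfCardEq (by simp [X]; ring)
  refine ⟨fun c p q => R c (e p) (e q), ?_, ?_, ?_⟩
  · intro c
    exact ⟨fun p => (Req c).refl _, fun h => (Req c).symm h, fun h k => (Req c).trans h k⟩
  · intro c p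
    refine Eq.trans ?_ (Rc c (e p))
    exact Nat.card_congr (e.subtypeEquiv (fun _ => Iff.rfl))
  · intro p q hpq
    exact Ru _ _ (fun h => hpq (e.injective h))

/-- The edge set of `K_{(6t+3)(7)}` can be partitioned into `3t+1` `K_{7,7,7}`-factors,
where each `K_{7,7,7}`-factor has the parts of `K_{(6t+3)(7)}` as the partite sets of
its tripartite components (vertices lying in the same part lie in the same component). -/
theorem KMulti_K777_factorization (t : ℕ) :
    ∃ F : Fin (3 * t + 1) → SimpleGraph (Fin (6 * t + 3) × Fin 7),
      (∀ i, F i ≤ KMulti t) ∧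
      (∀ e ∈ (KMulti t).edgeSet, ∃! i, e ∈ (F i).edgeSet) ∧
      (∀ i, IsHFactor K777 (F i)) ∧
      (∀ i, ∀ x y : Fin (6 * t + 3) × Fin 7, x.1 = y.1 →
        (F i).connectedComponentMk x = (F i).connectedComponentMk y) := by
  obtain ⟨rel, heq, hcard, huniq⟩ := KTS_exists t
  let F : Fin (3 * t + 1) → SimpleGraph (Fin (6 * t + 3) × Fin 7) := fun c =>
    { Adj := fun x y => x.1 ≠ y.1 ∧ rel c x.1 y.1
      symm := ⟨fun _ _ h => ⟨h.1.symm, (heq c).symm h.2⟩⟩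
      loopless := ⟨fun _ h => h.1 rfl⟩ }
  have hadj : ∀ c x y, (F c).Adj x y ↔ x.1 ≠ y.1 ∧ rel c x.1 y.1 := fun _ _ _ => Iff.rfl
  have other : ∀ c p, ∃ q, q ≠ p ∧ rel c p q := by
    intro c p
    have h1 : 1 < Nat.card {q // rel c p q} := by rw [hcard]; norm_num
    have : Nontrivial {q // rel c p q} := (Finite.one_lt_card_iff_nontrivial).1 h1
    obtain ⟨⟨q, hq⟩, hne⟩ := exists_ne (⟨p, (heq c).refl p⟩ : {q // rel c p q})
    exact ⟨q, fun h => hne (Subtype.ext h), hq⟩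
  have reach : ∀ c x y, (F c).Reachable x y ↔ rel c x.1 y.1 := by
    intro c x y
    constructor
    · rintro ⟨w⟩
      induction w with
      | nil => exact (heq c).refl _
      | cons h _ ih => exact (heq c).trans h.2 ih
    · intro h
      by_cases hxy : x.1 = y.1
      · obtain ⟨q, hq, hr⟩ := other c x.1
        have a1 : (F c).Adj x (q, 0) := ⟨hq.symm, hr⟩
        have a2 : (F c).Adj (q, 0) y := ⟨fun h => hq (h.trans hxy.symm), (heq c).trans ((heq c).symm hr) h⟩
        exact a1.reachable.trans a2.reachable
      · have a1 : (F c).Adj x y := ⟨hxy, h⟩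
        exact a1.reachable
  refine ⟨F, ?_, ?_, ?_, ?_⟩
  · intro i x y h
    exact h.1
  · intro e
    induction e using Sym2.ind with
    | _ x y =>
      intro he
      have hxy : x.1 ≠ y.1 := he
      obtain ⟨c, hc, hu⟩ := huniq _ _ hxy
      refine ⟨c, ⟨hxy, hc⟩, ?_⟩
      intro c' hc'
      exact hu c' (And.right hc')
  · intro c comp
    induction comp using SimpleGraph.ConnectedComponent.ind with
    | _ v =>
      have hs : ∀ x, x ∈ ((F c).connectedComponentMk v).supp ↔ rel c v.1 x.1 := by
        intro x
        rw [SimpleGraph.ConnectedComponent.mem_supp_iff, SimpleGraph.ConnectedComponent.eq, reach]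
        exact ⟨fun h => (heq c).symm h, fun h => (heq c).symm h⟩
      let e3 : {q // rel c v.1 q} ≃ ZMod 3 :=
        (Finite.equivFinOfCardEq (hcard c v.1)).trans (Fintype.equivOfCardEq (by simp))
      let e7 : Fin 7 ≃ ZMod 7 := Fintype.equivOfCardEq (by simp)
      refine ⟨⟨⟨fun x => (e7 x.1.2, e3 ⟨x.1.1, (hs _).1 x.2⟩),
        fun z => ⟨((e3.symm z.2).1, e7.symm z.1), (hs _).2 (e3.symm z.2).2⟩, ?_, ?_⟩, ?_⟩⟩
      · rintro ⟨x, hx⟩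
        simp
      · rintro ⟨z, w⟩
        simp
      · rintro ⟨x, hx⟩ ⟨y, hy⟩
        have hr : rel c x.1 y.1 := (heq c).trans ((heq c).symm ((hs _).1 hx)) ((hs _).1 hy)
        simp only [K777, Equiv.coe_fn_mk, SimpleGraph.comap_adj, Function.Embedding.subtype_apply,
          hadj, ne_eq, EmbeddingLike.apply_eq_iff_eq, Subtype.mk.injEq, hr, and_true]
  · intro c x y hxy
    rw [SimpleGraph.ConnectedComponent.eq, reach, hxy]
    exact (heq c).refl _
end
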